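/- arXiv:2406.07821 — 3 statements merged into one kernel-verified Lean document; each statement's English description precedes it below -/
import Mathlib

section
/- For integers $t \ge 1$ and $r \ge 2$, there exists $N$ such that for all $n \ge N$ the following holds. Let $\mathcal{G}$ be a normal subset of $\mathcal{T}_{n,r,t}$ such that $\{G \in \mathcal{G} : H^G \in \mathrm{EX}^2(\mathcal{H}^{\mathcal{G}})\} \subseteq \bigcup_{1 \le i \le r} \mathcal{G}_i$. Then for any $1 \le i \le r$ and any graph $G \in \mathcal{G}_i$, $G \in \mathrm{SPEX}(\mathcal{G}_i)$ if and only if $H^G \in \mathrm{EX}^{\infty}(\mathcal{H}^{\mathcal{G}_i})$. -/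
open Finset Matrix SimpleGraph
open scoped Classical

/-- `walkCount G ℓ u` is the number of walks of length `ℓ` in `G` starting at `u`
(the quantity `w^ℓ_G(u)` of the paper, with `walkCount G 0 u = 1`). -/
noncomputable def walkCount {V : Type*} [Fintype V] (G : SimpleGraph V) : ℕ → V → ℕ
  | 0, _ => 1
  | ℓ + 1, u => ∑ v ∈ Finset.univ.filter (fun v => G.Adj u v), walkCount G ℓ v

/-- `totalWalks G ℓ = W^ℓ(G) = ∑_u w^ℓ_G(u)`, the number of walks of length `ℓ` in `G`. -/
noncomputable def totalWalks {V : Type*} [Fintype V] (G : SimpleGraph V) (ℓ : ℕ) : ℕ :=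
  ∑ u, walkCount G ℓ u

/-- The spectral radius `ρ(G)` of a graph `G`: the largest eigenvalue of its
adjacency matrix. -/
noncomputable def spectralRad {V : Type*} [Fintype V] (G : SimpleGraph V) : ℝ :=
  sSup {μ : ℝ | ∃ x : V → ℝ, x ≠ 0 ∧ (G.adjMatrix ℝ) *ᵥ x = μ • x}
/-- `EXiter ℓ ℋ = EX^ℓ(ℋ)`: the members of `ℋ` that successively maximize
`W¹, W², …, W^ℓ`. -/
noncomputable def EXiter {V : Type*} [Fintype V] :
    ℕ → Set (SimpleGraph V) → Set (SimpleGraph V)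
  | 0, ℋ => ℋ
  | ℓ + 1, ℋ =>
      {H ∈ EXiter ℓ ℋ | ∀ H' ∈ EXiter ℓ ℋ, totalWalks H' (ℓ + 1) ≤ totalWalks H (ℓ + 1)}

/-- `SPEXset 𝒢`: the members of `𝒢` with maximum spectral radius. -/
noncomputable def SPEXset {V : Type*} [Fintype V] (𝒢 : Set (SimpleGraph V)) :
    Set (SimpleGraph V) :=
  {G ∈ 𝒢 | ∀ G' ∈ 𝒢, spectralRad G' ≤ spectralRad G}

/-- `emb n r G = H^G`: the graph of the edges of `G` beyond the Turán graph `T(n,r)`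
(whose parts are the residue classes `V_i = {v : (v : ℕ) % r = i}`). -/
def emb (n r : ℕ) (G : SimpleGraph (Fin n)) : SimpleGraph (Fin n) :=
  G \ turanGraph n r

/-- `TuranFam n r t = 𝒯_{n,r,t}`: the graphs obtained from the Turán graph `T(n,r)` by
embedding `t` edges into its parts. -/
noncomputable def TuranFam (n r t : ℕ) : Set (SimpleGraph (Fin n)) :=
  {G | turanGraph n r ≤ G ∧
    (∀ u v : Fin n, (emb n r G).Adj u v → (u : ℕ) % r = (v : ℕ) % r) ∧
    (emb n r G).edgeFinset.card = t}

/-- `inPart n r i G`: all embedded edges of `G` lie inside the part `V_i` (so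
`H^G = H^G_i`). -/
def inPart (n r : ℕ) (i : Fin r) (G : SimpleGraph (Fin n)) : Prop :=
  ∀ u v : Fin n, (emb n r G).Adj u v → (u : ℕ) % r = (i : ℕ)

/-- `classSet n r 𝒢 i = 𝒢_i`. -/
def classSet (n r : ℕ) (𝒢 : Set (SimpleGraph (Fin n))) (i : Fin r) :
    Set (SimpleGraph (Fin n)) :=
  {G ∈ 𝒢 | inPart n r i G}

/-- `𝒢` is a normal subset of `𝒯_{n,r,t}`: for any `i ≠ j` and any `G ∈ 𝒢_i` there is
`G' ∈ 𝒢_j` with `H^{G'}` a copy of `H^G`. -/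
def IsNormal (n r : ℕ) (𝒢 : Set (SimpleGraph (Fin n))) : Prop :=
  ∀ i j : Fin r, i ≠ j → ∀ G ∈ classSet n r 𝒢 i, ∃ G' ∈ classSet n r 𝒢 j,
    Nonempty (emb n r G ≃g emb n r G')

/-- `partSize n r i = n_i`: the size of the part `V_i` of the Turán graph `T(n,r)`. -/
def partSize (n r : ℕ) (i : Fin r) : ℕ :=
  (Finset.univ.filter (fun v : Fin n => (v : ℕ) % r = (i : ℕ))).card

lemma aux_mulVec {V : Type*} [Fintype V] (G : SimpleGraph V) (x : V → ℝ) (u : V) :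
    ((G.adjMatrix ℝ) *ᵥ x) u = ∑ v, if G.Adj u v then x v else 0 := by
  simp [Matrix.mulVec, dotProduct, SimpleGraph.adjMatrix_apply]

lemma aux_perron {V : Type*} [Fintype V] [Nonempty V] (G : SimpleGraph V) :
    ∃ x : V → ℝ, (∀ u, 0 ≤ x u) ∧ x ≠ 0 ∧
      (G.adjMatrix ℝ) *ᵥ x = spectralRad G • x := by
  set A := G.adjMatrix ℝ with hA
  set T : EuclideanSpace ℝ V →L[ℝ] EuclideanSpace ℝ V := Matrix.toEuclideanCLM (𝕜 := ℝ) A with hT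
  have hAH : A.IsHermitian := by
    rw [Matrix.isHermitian_iff_isSymm]; exact G.isSymm_adjMatrix
  have hTs : IsSelfAdjoint T := by
    rw [ContinuousLinearMap.isSelfAdjoint_iff_isSymmetric]
    exact Matrix.isSymmetric_toEuclideanLin_iff.mpr hAH
  have hTq : ∀ x : EuclideanSpace ℝ V, T.reApplyInnerSelf x =
      ∑ u, ∑ v, if G.Adj u v then x u * x v else 0 := by
    intro x
    rw [ContinuousLinearMap.reApplyInnerSelf_apply]
    simp only [RCLike.re_to_real, PiLp.inner_apply, RCLike.inner_apply, conj_trivial]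
    refine Finset.sum_congr rfl fun u _ => ?_
    have : (T x) u = (A *ᵥ x.ofLp) u := by rw [hT, Matrix.ofLp_toEuclideanCLM]
    rw [this, hA, aux_mulVec, Finset.mul_sum]
    refine Finset.sum_congr rfl fun v _ => ?_
    split_ifs <;> simp
  have hne : (Metric.sphere (0 : EuclideanSpace ℝ V) 1).Nonempty :=
    NormedSpace.sphere_nonempty.mpr zero_le_one
  obtain ⟨x0, hx0, hmax⟩ := (isCompact_sphere (0 : EuclideanSpace ℝ V) 1).exists_isMaxOn hne
    T.reApplyInnerSelf_continuous.continuousOn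
  set y : EuclideanSpace ℝ V := WithLp.toLp 2 (fun u => |x0 u|) with hy
  have hyn : ‖y‖ = 1 := by
    have h1 : ‖x0‖ = 1 := by simpa using hx0
    rw [← h1, EuclideanSpace.norm_eq, EuclideanSpace.norm_eq]
    simp [hy]
  have hy0 : y ≠ 0 := by
    intro h; rw [h] at hyn; simp at hyn
  have hle : T.reApplyInnerSelf x0 ≤ T.reApplyInnerSelf y := by
    rw [hTq, hTq]
    refine Finset.sum_le_sum fun u _ => Finset.sum_le_sum fun v _ => ?_
    split_ifs
    · simp only [hy]
      rw [← abs_mul]; exact le_abs_self _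
    · exact le_rfl
  have hmaxy : IsMaxOn T.reApplyInnerSelf (Metric.sphere (0 : EuclideanSpace ℝ V) ‖y‖) y := by
    intro z hz
    rw [hyn] at hz
    exact (hmax hz).trans hle
  have hev := hTs.eq_smul_self_of_isLocalExtrOn_real (Or.inr hmaxy.localize)
  set q := T.rayleighQuotient y with hq
  have hqy : A *ᵥ y.ofLp = q • y.ofLp := by
    rw [← Matrix.ofLp_toEuclideanCLM (𝕜 := ℝ), ← hT, hev]; rfl
  have hyl0 : y.ofLp ≠ 0 := by
    intro h; apply hy0; ext u; simp [h]
  have hqv : q = T.reApplyInnerSelf y := by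
    rw [hq, ContinuousLinearMap.rayleighQuotient, hyn]; simp
  have hspec : spectralRad G = q := by
    apply IsGreatest.csSup_eq
    refine ⟨⟨y.ofLp, hyl0, hqy⟩, ?_⟩
    rintro μ ⟨x, hx, hxμ⟩
    set z : EuclideanSpace ℝ V := WithLp.toLp 2 x with hz
    have hz0 : z ≠ 0 := by
      intro h; apply hx
      have := congrArg WithLp.ofLp h
      simpa [hz] using this
    have hzn : 0 < ‖z‖ := norm_pos_iff.mpr hz0
    set c := ‖z‖⁻¹ with hc
    have hTz : T z = μ • z := by
      rw [hT, hz, Matrix.toEuclideanCLM_toLp, hxμ]; rfl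
    have hcz : ‖c • z‖ = 1 := by
      rw [norm_smul, hc]; simp; field_simp
    have hm : T.reApplyInnerSelf (c • z) ≤ T.reApplyInnerSelf y :=
      (hmax (by simpa using hcz)).trans hle
    rw [← hqv] at hm
    have : T.reApplyInnerSelf (c • z) = μ := by
      rw [ContinuousLinearMap.reApplyInnerSelf_apply, map_smul, hTz, smul_comm, inner_smul_left,
        real_inner_self_eq_norm_sq, hcz]
      simp
    linarith
  refine ⟨y.ofLp, fun u => ?_, hyl0, ?_⟩
  · simp [hy]
  · rw [hspec, hqy]

lemma aux_adj {n r t : ℕ} {G : SimpleGraph (Fin n)} (hG : G ∈ TuranFam n r t) (u v : Fin n) :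
    G.Adj u v ↔ ((u : ℕ) % r ≠ (v : ℕ) % r ∨ (emb n r G).Adj u v) := by
  constructor
  · intro h
    by_cases h1 : (u : ℕ) % r = (v : ℕ) % r
    · right
      rw [emb, SimpleGraph.sdiff_adj]
      exact ⟨h, fun h2 => (SimpleGraph.turanGraph_adj.mp h2) h1⟩
    · exact Or.inl h1
  · rintro (h | h)
    · exact hG.1 (SimpleGraph.turanGraph_adj.mpr h)
    · rw [emb, SimpleGraph.sdiff_adj] at h
      exact h.1

/-- there are at least `n / r` vertices outside any residue class -/
lemma aux_count (n r a : ℕ) (hr : 2 ≤ r) :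
    n / r ≤ (Finset.univ.filter (fun v : Fin n => a ≠ (v : ℕ) % r)).card := by
  obtain ⟨b, hb, hab⟩ : ∃ b, b < r ∧ a ≠ b := by
    by_cases h : a = 0
    · exact ⟨1, by omega, by omega⟩
    · exact ⟨0, by omega, h⟩
  have hlt : ∀ m : Fin (n / r), r * (m : ℕ) + b < n := by
    intro m
    have h1 : (m : ℕ) + 1 ≤ n / r := m.2
    have h2 : r * ((m : ℕ) + 1) ≤ r * (n / r) := Nat.mul_le_mul_left r h1
    have h3 : r * (n / r) ≤ n := Nat.mul_div_le n r
    have h4 : r * ((m : ℕ) + 1) = r * m + r := by ring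
    omega
  have := Finset.card_le_card_of_injOn (s := (Finset.univ : Finset (Fin (n / r))))
    (t := Finset.univ.filter (fun v : Fin n => a ≠ (v : ℕ) % r))
    (fun m => (⟨r * (m : ℕ) + b, hlt m⟩ : Fin n)) ?_ ?_
  · simpa using this
  · intro m _
    simp [Nat.add_mod, Nat.mod_eq_of_lt hb, hab]
  · intro m _ m' _ h
    simp only [Fin.mk.injEq] at h
    have h1 : r * (m : ℕ) = r * m' := by omega
    exact Fin.ext (Nat.eq_of_mul_eq_mul_left (by omega) h1)

lemma aux_rho_ge {n r t : ℕ} (hr : 2 ≤ r) (hn : 0 < n) {G : SimpleGraph (Fin n)}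
    (hG : G ∈ TuranFam n r t) : ((n / r : ℕ) : ℝ) ≤ spectralRad G := by
  have : Nonempty (Fin n) := ⟨⟨0, hn⟩⟩
  obtain ⟨x, hx, hx0, hev⟩ := aux_perron G
  have hpos : 0 < ∑ u, x u := by
    obtain ⟨u, hu⟩ := Function.ne_iff.mp hx0
    exact Finset.sum_pos' (fun v _ => hx v)
      ⟨u, Finset.mem_univ _, lt_of_le_of_ne (hx u) (Ne.symm hu)⟩
  have hsum : spectralRad G * ∑ u, x u = ∑ v, ∑ u, if G.Adj u v then x v else 0 := by
    rw [Finset.mul_sum, Finset.sum_comm]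
    refine Finset.sum_congr rfl fun u _ => ?_
    rw [← aux_mulVec, hev]; rfl
  have hge : ((n / r : ℕ) : ℝ) * ∑ u, x u ≤ spectralRad G * ∑ u, x u := by
    rw [hsum, Finset.mul_sum]
    refine Finset.sum_le_sum fun v _ => ?_
    rw [← Finset.sum_filter, Finset.sum_const, nsmul_eq_mul]
    refine mul_le_mul_of_nonneg_right ?_ (hx v)
    norm_cast
    refine (aux_count n r ((v : ℕ) % r) hr).trans (Finset.card_le_card ?_)
    intro u hu
    simp only [Finset.mem_filter, Finset.mem_univ, true_and] at hu ⊢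
    exact (aux_adj hG u v).mpr (Or.inl (Ne.symm hu))
  exact le_of_mul_le_mul_right hge hpos

lemma aux_struct {n r t : ℕ} (hr : 2 ≤ r) (hnr : r ≤ n) (i : Fin r) {G : SimpleGraph (Fin n)}
    (hG : G ∈ TuranFam n r t) (hin : inPart n r i G) :
    ∃ x : Fin n → ℝ, (∀ u, 0 ≤ x u) ∧
      (∀ u : Fin n, (u : ℕ) % r = i → spectralRad G * x u =
        1 + ∑ v, if (emb n r G).Adj u v then x v else 0) ∧
      (1 + ∑ u ∈ Finset.univ.filter (fun u : Fin n => (u : ℕ) % r = i), x u) *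
        (∑ u ∈ Finset.univ.filter (fun u : Fin n => ¬ (u : ℕ) % r = i),
          1 / (spectralRad G +
            ((Finset.univ.filter (fun v : Fin n => (v : ℕ) % r = (u : ℕ) % r)).card : ℝ))) = 1 := by
  have : Nonempty (Fin n) := ⟨⟨0, by omega⟩⟩
  obtain ⟨x, hx, hx0, hev⟩ := aux_perron G
  have hρ1 : (1 : ℝ) ≤ spectralRad G := by
    refine le_trans ?_ (aux_rho_ge hr (by omega) hG)
    have : 1 ≤ n / r := (Nat.one_le_div_iff (by omega)).mpr hnr
    exact_mod_cast this
  set ρ := spectralRad G with hρ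
  -- eigen equation
  have heq : ∀ u, ρ * x u = (∑ v ∈ Finset.univ.filter (fun v : Fin n => ¬ (v : ℕ) % r = (u : ℕ) % r),
      x v) + ∑ v, if (emb n r G).Adj u v then x v else 0 := by
    intro u
    have h1 : ρ * x u = ∑ v, if G.Adj u v then x v else 0 := by
      rw [← aux_mulVec, hev]; rfl
    rw [h1, Finset.sum_filter, ← Finset.sum_add_distrib]
    refine Finset.sum_congr rfl fun v _ => ?_
    have h2 := aux_adj hG u v
    have h3 := hG.2.1 u v
    by_cases ha : (emb n r G).Adj u v
    · have h4 := h3 ha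
      simp [ha, h2, h4]
    · by_cases hb : (u : ℕ) % r = (v : ℕ) % r
      · simp [ha, h2, hb]
      · simp [ha, h2, hb, Ne.symm hb]
  set P := Finset.univ.filter (fun u : Fin n => (u : ℕ) % r = i) with hP
  set Q := Finset.univ.filter (fun u : Fin n => ¬ (u : ℕ) % r = i) with hQ
  have hsplit : ∑ u, x u = ∑ u ∈ P, x u + ∑ u ∈ Q, x u :=
    (Finset.sum_filter_add_sum_filter_not _ _ _).symm
  have hPeq : ∀ u : Fin n, (u : ℕ) % r = i → ρ * x u =
      (∑ u ∈ Q, x u) + ∑ v, if (emb n r G).Adj u v then x v else 0 := by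
    intro u hu
    rw [heq u, hQ]
    simp only [hu]
  -- outside
  have hQeq : ∀ u : Fin n, ¬ (u : ℕ) % r = i → ρ * x u +
      (∑ v ∈ Finset.univ.filter (fun v : Fin n => (v : ℕ) % r = (u : ℕ) % r), x v)
        = ∑ v, x v := by
    intro u hu
    have h0 : (∑ v, if (emb n r G).Adj u v then x v else 0) = 0 := by
      refine Finset.sum_eq_zero fun v _ => ?_
      rw [if_neg]
      intro h; exact hu (hin u v h)
    rw [heq u, h0, add_zero, add_comm]
    exact Finset.sum_filter_add_sum_filter_not _ _ _
  have hQeq2 : ∀ u : Fin n, ¬ (u : ℕ) % r = i → x u * (ρ +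
      ((Finset.univ.filter (fun v : Fin n => (v : ℕ) % r = (u : ℕ) % r)).card : ℝ)) = ∑ v, x v := by
    intro u hu
    rw [← hQeq u hu]
    have : ∑ v ∈ Finset.univ.filter (fun v : Fin n => (v : ℕ) % r = (u : ℕ) % r), x v =
        ∑ v ∈ Finset.univ.filter (fun v : Fin n => (v : ℕ) % r = (u : ℕ) % r), x u := by
      refine Finset.sum_congr rfl fun v hv => ?_
      have hv' : (v : ℕ) % r = (u : ℕ) % r := by simpa using hv
      have e1 := hQeq u hu
      have e2 := hQeq v (by rw [hv']; exact hu)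
      rw [hv'] at e2
      have : ρ * x v = ρ * x u := by linarith
      exact mul_left_cancel₀ (by linarith) this
    rw [this, Finset.sum_const, nsmul_eq_mul]; ring
  have hden : ∀ u : Fin n, 0 < ρ +
      ((Finset.univ.filter (fun v : Fin n => (v : ℕ) % r = (u : ℕ) % r)).card : ℝ) := by
    intro u; positivity
  have hSpos : 0 < ∑ u, x u := by
    obtain ⟨u, hu⟩ := Function.ne_iff.mp hx0
    exact Finset.sum_pos' (fun v _ => hx v)
      ⟨u, Finset.mem_univ _, lt_of_le_of_ne (hx u) (Ne.symm hu)⟩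
  have hQval : ∀ u ∈ Q, x u = (∑ v, x v) * (1 / (ρ +
      ((Finset.univ.filter (fun v : Fin n => (v : ℕ) % r = (u : ℕ) % r)).card : ℝ))) := by
    intro u hu
    have hu' : ¬ (u : ℕ) % r = i := by simpa [hQ] using hu
    rw [← hQeq2 u hu', mul_one_div, mul_div_assoc, div_self (hden u).ne', mul_one]
  have hQne : Q.Nonempty := by
    have h1 := aux_count n r i hr
    have h2 : 1 ≤ n / r := (Nat.one_le_div_iff (by omega)).mpr hnr
    have h3 := Finset.card_pos.mp (lt_of_lt_of_le (by omega) (h2.trans h1))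
    obtain ⟨v, hv⟩ := h3
    refine ⟨v, ?_⟩
    simp only [Finset.mem_filter, Finset.mem_univ, true_and, hQ] at hv ⊢
    exact fun h => hv h.symm
  have hSQ : 0 < ∑ u ∈ Q, x u := by
    refine Finset.sum_pos (fun u hu => ?_) hQne
    rw [hQval u hu]
    exact mul_pos hSpos (one_div_pos.mpr (hden u))
  set s := ∑ u ∈ Q, x u with hs
  refine ⟨fun u => x u / s, fun u => div_nonneg (hx u) hSQ.le, ?_, ?_⟩
  · intro u hu
    have h1 : (∑ v, if (emb n r G).Adj u v then x v / s else 0) =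
        (∑ v, if (emb n r G).Adj u v then x v else 0) / s := by
      rw [Finset.sum_div]
      refine Finset.sum_congr rfl fun v _ => ?_
      split_ifs <;> simp
    rw [h1, ← mul_div_assoc, hPeq u hu, add_div, div_self hSQ.ne']
  · have h2 : 1 + ∑ u ∈ P, x u / s = (∑ u, x u) / s := by
      rw [← Finset.sum_div, hsplit, add_div, div_self hSQ.ne', add_comm]
    rw [h2, div_mul_eq_mul_div, Finset.mul_sum, ← Finset.sum_congr rfl hQval, div_self hSQ.ne']

lemma aux_deg {n t : ℕ} (H : SimpleGraph (Fin n)) (hH : H.edgeFinset.card = t) (u : Fin n) :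
    (Finset.univ.filter (fun v => H.Adj u v)).card ≤ t := by
  rw [← hH, ← SimpleGraph.neighborFinset_eq_filter, SimpleGraph.card_neighborFinset_eq_degree,
    ← SimpleGraph.card_incidenceFinset_eq_degree]
  exact Finset.card_le_card (SimpleGraph.incidenceFinset_subset _ _)

lemma aux_walk_le {n t : ℕ} (H : SimpleGraph (Fin n)) (hH : H.edgeFinset.card = t) (ℓ : ℕ)
    (u : Fin n) : walkCount H ℓ u ≤ t ^ ℓ := by
  induction ℓ generalizing u with
  | zero => simp [walkCount]
  | succ ℓ ih =>
    rw [walkCount]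
    calc _ ≤ ∑ v ∈ Finset.univ.filter (fun v => H.Adj u v), t ^ ℓ :=
          Finset.sum_le_sum fun v _ => ih v
      _ = (Finset.univ.filter (fun v => H.Adj u v)).card * t ^ ℓ := by simp
      _ ≤ t * t ^ ℓ := Nat.mul_le_mul_right _ (aux_deg H hH u)
      _ = t ^ (ℓ + 1) := by ring

lemma aux_D {n r t : ℕ} (hr : 2 ≤ r) (hnr : r ≤ n) (i : Fin r) {G : SimpleGraph (Fin n)}
    (hG : G ∈ TuranFam n r t) (hin : inPart n r i G) (hρt : (t : ℝ) < spectralRad G) :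
    ∃ (D : ℕ → ℝ) (c : ℕ → ℕ), (∀ ℓ, 0 ≤ D ℓ) ∧
      (∀ ℓ, spectralRad G * D ℓ = c ℓ + D (ℓ + 1)) ∧
      (∀ ℓ, D ℓ * (spectralRad G - t) ≤ c ℓ) ∧
      (∀ ℓ, c ℓ ≤ n * t ^ ℓ) ∧
      c 0 = partSize n r i ∧
      (∀ ℓ, c (ℓ + 1) = totalWalks (emb n r G) (ℓ + 1)) ∧
      (1 + D 0) *
        (∑ u ∈ Finset.univ.filter (fun u : Fin n => ¬ (u : ℕ) % r = i),
          1 / (spectralRad G +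
            ((Finset.univ.filter (fun v : Fin n => (v : ℕ) % r = (u : ℕ) % r)).card : ℝ))) = 1 := by
  obtain ⟨x, hx, hev, hS⟩ := aux_struct hr hnr i hG hin
  set ρ := spectralRad G with hρ
  set H := emb n r G with hH
  set P := Finset.univ.filter (fun u : Fin n => (u : ℕ) % r = i) with hP
  have hmem : ∀ u, u ∈ P ↔ (u : ℕ) % r = i := by intro u; simp [hP]
  have hHP : ∀ u v, H.Adj u v → u ∈ P := fun u v h => (hmem u).mpr (hin u v h)
  have hout : ∀ ℓ, ∀ u, u ∉ P → walkCount H (ℓ + 1) u = 0 := by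
    intro ℓ u hu
    rw [walkCount]
    apply Finset.sum_eq_zero
    intro v hv
    exact absurd (hHP u v (by simpa using hv)) hu
  have hwsucc : ∀ ℓ u, (walkCount H (ℓ + 1) u : ℝ) =
      ∑ v, if H.Adj u v then (walkCount H ℓ v : ℝ) else 0 := by
    intro ℓ u
    rw [walkCount, Finset.sum_filter]
    push_cast
    rfl
  have hxle : ∀ u ∈ P, x u * (ρ - t) ≤ 1 := by
    by_cases hne : P.Nonempty
    · obtain ⟨m, hm, hmax⟩ := Finset.exists_max_image P x hne
      have h1 := hev m ((hmem m).mp hm)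
      have h2 : (∑ v, if H.Adj m v then x v else 0) ≤ t * x m := by
        rw [← Finset.sum_filter]
        calc _ ≤ ∑ v ∈ Finset.univ.filter (fun v => H.Adj m v), x m := by
              refine Finset.sum_le_sum fun v hv => hmax v ?_
              exact hHP v m (by simpa using (Finset.mem_filter.mp hv).2.symm)
          _ = (Finset.univ.filter (fun v => H.Adj m v)).card * x m := by simp
          _ ≤ t * x m := by
              refine mul_le_mul_of_nonneg_right ?_ (hx m)
              exact_mod_cast aux_deg H hG.2.2 m
      intro u hu
      have h3 : x u * (ρ - t) ≤ x m * (ρ - t) :=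
        mul_le_mul_of_nonneg_right (hmax u hu) (by linarith)
      linarith
    · intro u hu
      exact absurd ⟨u, hu⟩ hne
  refine ⟨fun ℓ => ∑ u ∈ P, walkCount H ℓ u * x u, fun ℓ => ∑ u ∈ P, walkCount H ℓ u,
    ?_, ?_, ?_, ?_, ?_, ?_, ?_⟩
  · intro ℓ
    exact Finset.sum_nonneg fun u _ => mul_nonneg (Nat.cast_nonneg _) (hx u)
  · intro ℓ
    have h1 : ∑ u ∈ P, (walkCount H (ℓ + 1) u : ℝ) * x u =
        ∑ u, (walkCount H (ℓ + 1) u : ℝ) * x u := by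
      refine Finset.sum_subset (Finset.subset_univ _) fun u _ hu => ?_
      rw [hout ℓ u hu]; simp
    have h2 : ∑ u, (walkCount H (ℓ + 1) u : ℝ) * x u =
        ∑ u ∈ P, (walkCount H ℓ u : ℝ) * ∑ v, if H.Adj u v then x v else 0 := by
      simp only [hwsucc, Finset.sum_mul]
      rw [Finset.sum_comm]
      rw [← Finset.sum_subset (Finset.subset_univ P)]
      · refine Finset.sum_congr rfl fun u _ => ?_
        rw [Finset.mul_sum]
        refine Finset.sum_congr rfl fun v _ => ?_
        simp only [H.adj_comm v u]
        split_ifs <;> simp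
      · intro u _ hu
        refine Finset.sum_eq_zero fun v _ => ?_
        rw [if_neg, zero_mul]
        intro h; exact hu (hHP u v h.symm)
    simp only
    rw [h1, h2, Finset.mul_sum]
    push_cast
    rw [← Finset.sum_add_distrib]
    refine Finset.sum_congr rfl fun u hu => ?_
    have := hev u ((hmem u).mp hu)
    rw [mul_left_comm, this]; ring
  · intro ℓ
    simp only
    rw [Finset.sum_mul]
    push_cast
    refine Finset.sum_le_sum fun u hu => ?_
    have := mul_le_mul_of_nonneg_left (hxle u hu) (Nat.cast_nonneg (α := ℝ) (walkCount H ℓ u))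
    linarith
  · intro ℓ
    calc _ ≤ ∑ u ∈ P, t ^ ℓ := Finset.sum_le_sum fun u _ => aux_walk_le H hG.2.2 ℓ u
      _ = P.card * t ^ ℓ := by simp
      _ ≤ n * t ^ ℓ := by
        refine Nat.mul_le_mul_right _ ?_
        simpa using Finset.card_le_univ P
  · simp [walkCount, partSize, hP]
  · intro ℓ
    rw [totalWalks]
    exact Finset.sum_subset (Finset.subset_univ _) fun u _ hu => hout ℓ u hu
  · simpa [walkCount] using hS

lemma aux_seq_lt {ρ ρ' : ℝ} {D D' : ℕ → ℝ} {c c' : ℕ → ℕ} (hρ : 0 < ρ) (hρρ : ρ ≤ ρ')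
    (hD : ∀ ℓ, 0 ≤ D ℓ) (h : ∀ ℓ, ρ * D ℓ = c ℓ + D (ℓ + 1))
    (h' : ∀ ℓ, ρ' * D' ℓ = c' ℓ + D' (ℓ + 1)) (k : ℕ)
    (heq : ∀ ℓ < k, c ℓ = c' ℓ) (hk : c' k < c k) (hs : D' (k + 1) < 1) : D' 0 < D 0 := by
  have key : ∀ ℓ, c' ℓ + D' (ℓ + 1) < c ℓ + D (ℓ + 1) → D' ℓ < D ℓ := by
    intro ℓ hl
    rw [← h, ← h'] at hl
    have : ρ * D ℓ ≤ ρ' * D ℓ := mul_le_mul_of_nonneg_right hρρ (hD ℓ)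
    exact lt_of_mul_lt_mul_left (hl.trans_le this) (by linarith)
  have hkk : D' k < D k := by
    apply key
    have h1 : (c' k : ℝ) + 1 ≤ c k := by exact_mod_cast hk
    have := hD (k + 1)
    linarith
  have : ∀ j ≤ k, D' (k - j) < D (k - j) := by
    intro j
    induction j with
    | zero => intro _; simpa using hkk
    | succ j ih =>
      intro hj
      apply key
      have e : k - (j + 1) + 1 = k - j := by omega
      rw [e, heq _ (by omega)]
      have := ih (by omega)
      linarith
  simpa using this k le_rfl

lemma aux_seq_eq {ρ ρ' t C : ℝ} {D D' : ℕ → ℝ} {c : ℕ → ℕ} (ht : 0 ≤ t) (hρt : t < ρ')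
    (hρρ : ρ ≤ ρ')
    (hD : ∀ ℓ, 0 ≤ D ℓ) (h : ∀ ℓ, ρ * D ℓ = c ℓ + D (ℓ + 1))
    (h' : ∀ ℓ, ρ' * D' ℓ = c ℓ + D' (ℓ + 1))
    (hb : ∀ ℓ, D' ℓ * (ρ' - t) ≤ c ℓ) (hc : ∀ ℓ, (c ℓ : ℝ) ≤ C * t ^ ℓ) : D' 0 ≤ D 0 := by
  by_contra! hcon
  have hpos : 0 < ρ' := by linarith
  have hg : ∀ ℓ, ρ' ^ ℓ * (D' 0 - D 0) ≤ D' ℓ - D ℓ := by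
    intro ℓ
    induction ℓ with
    | zero => simp
    | succ ℓ ih =>
      have h1 : ρ * D ℓ ≤ ρ' * D ℓ := mul_le_mul_of_nonneg_right hρρ (hD ℓ)
      have h2 := mul_le_mul_of_nonneg_left ih hpos.le
      have h3 := h ℓ
      have h4 := h' ℓ
      have e : ρ' ^ (ℓ + 1) * (D' 0 - D 0) = ρ' * (ρ' ^ ℓ * (D' 0 - D 0)) := by ring
      rw [e]
      linarith
  have hfin : ∀ ℓ, (D' 0 - D 0) * (ρ' - t) ≤ C * (t / ρ') ^ ℓ := by
    intro ℓ
    have h1 := hg ℓ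
    have h2 := hD ℓ
    have h3 : ρ' ^ ℓ * (D' 0 - D 0) * (ρ' - t) ≤ D' ℓ * (ρ' - t) :=
      mul_le_mul_of_nonneg_right (by linarith) (by linarith)
    have h4 := (h3.trans (hb ℓ)).trans (hc ℓ)
    rw [div_pow, ← mul_div_assoc, le_div_iff₀ (pow_pos hpos ℓ)]
    linarith
  have hlim : Filter.Tendsto (fun ℓ : ℕ => C * (t / ρ') ^ ℓ) Filter.atTop (nhds (C * 0)) := by
    apply Filter.Tendsto.const_mul
    exact tendsto_pow_atTop_nhds_zero_of_lt_one (div_nonneg ht hpos.le)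
      ((div_lt_one hpos).mpr hρt)
  have := ge_of_tendsto' hlim hfin
  have h5 : 0 < (D' 0 - D 0) * (ρ' - t) := mul_pos (by linarith) (by linarith)
  linarith

lemma aux_walk_map {V W : Type*} [Fintype V] [Fintype W] (H : SimpleGraph V) (f : V ↪ W)
    (ℓ : ℕ) (v : V) : walkCount (H.map f) ℓ (f v) = walkCount H ℓ v := by
  induction ℓ generalizing v with
  | zero => simp [walkCount]
  | succ ℓ ih =>
    rw [walkCount, walkCount]
    have : (Finset.univ.filter (fun w => (H.map f).Adj (f v) w)) =
        (Finset.univ.filter (fun u => H.Adj v u)).map f := by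
      ext w
      simp only [Finset.mem_filter, Finset.mem_univ, true_and, Finset.mem_map,
        SimpleGraph.map_adj]
      constructor
      · rintro ⟨a, b, hab, ha, rfl⟩
        rw [f.injective ha] at hab
        exact ⟨b, hab, rfl⟩
      · rintro ⟨b, hb, rfl⟩
        exact ⟨v, b, hb, rfl, rfl⟩
    refine (Finset.sum_congr (s₂ := (Finset.univ.filter (fun u => H.Adj v u)).map f)
      ?_ (fun _ _ => rfl)).trans ?_
    · convert this
    · rw [Finset.sum_map]
      exact Finset.sum_congr rfl fun u _ => ih u

lemma aux_total_map {V W : Type*} [Fintype V] [Fintype W] (H : SimpleGraph V) (f : V ↪ W)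
    (ℓ : ℕ) : totalWalks (H.map f) (ℓ + 1) = totalWalks H (ℓ + 1) := by
  rw [totalWalks, totalWalks]
  rw [← Finset.sum_subset (Finset.subset_univ (Finset.univ.map f)), Finset.sum_map]
  · exact Finset.sum_congr rfl fun u _ => aux_walk_map H f _ u
  · intro w _ hw
    rw [walkCount]
    apply Finset.sum_eq_zero
    intro w' hw'
    exfalso
    simp only [Finset.mem_filter, Finset.mem_univ, true_and, SimpleGraph.map_adj] at hw'
    obtain ⟨a, b, _, rfl, _⟩ := hw'
    simp at hw

lemma aux_small {n t : ℕ} (H : SimpleGraph (Fin n)) (hH : H.edgeFinset.card = t) :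
    ∃ H0 : SimpleGraph (Fin (2 * t)), ∀ ℓ, totalWalks H (ℓ + 1) = totalWalks H0 (ℓ + 1) := by
  set S : Finset (Fin n) := H.edgeFinset.biUnion (fun e => e.toFinset) with hS
  have hcard : S.card ≤ 2 * t := by
    calc S.card ≤ H.edgeFinset.card * 2 := by
          refine Finset.card_biUnion_le_card_mul _ _ _ fun e _ => ?_
          rw [Sym2.card_toFinset]
          split_ifs <;> omega
      _ = 2 * t := by rw [hH, mul_comm]
  have hmem : ∀ u v, H.Adj u v → u ∈ S := by
    intro u v h
    rw [hS, Finset.mem_biUnion]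
    exact ⟨s(u, v), by simpa using h, by simp⟩
  obtain ⟨f⟩ : Nonempty (S ↪ Fin (2 * t)) := by
    apply Function.Embedding.nonempty_of_card_le
    simpa using hcard
  let H1 : SimpleGraph S := H.comap (fun u => (u : Fin n))
  have h1 : H1.map (Function.Embedding.subtype _) = H := by
    ext u v
    rw [SimpleGraph.map_adj]
    constructor
    · rintro ⟨a, b, hab, rfl, rfl⟩
      exact hab
    · intro h
      exact ⟨⟨u, hmem u v h⟩, ⟨v, hmem v u h.symm⟩, h, rfl, rfl⟩
  refine ⟨H1.map f, fun ℓ => ?_⟩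
  rw [aux_total_map, ← aux_total_map H1 (Function.Embedding.subtype _), h1]

lemma aux_bounds (t : ℕ) : ∃ K B : ℕ, ∀ (n : ℕ) (H H' : SimpleGraph (Fin n)),
    H.edgeFinset.card = t → H'.edgeFinset.card = t →
    ((∀ ℓ, totalWalks H (ℓ + 1) = totalWalks H' (ℓ + 1)) ∨
      ∃ k ≤ K, totalWalks H (k + 1) ≠ totalWalks H' (k + 1)) ∧
    ∀ ℓ ≤ K + 1, totalWalks H (ℓ + 1) ≤ B := by
  have h1 : ∀ p : SimpleGraph (Fin (2 * t)) × SimpleGraph (Fin (2 * t)), ∃ k,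
      (∀ ℓ, totalWalks p.1 (ℓ + 1) = totalWalks p.2 (ℓ + 1)) ∨
        totalWalks p.1 (k + 1) ≠ totalWalks p.2 (k + 1) := by
    intro p
    by_cases h : ∀ ℓ, totalWalks p.1 (ℓ + 1) = totalWalks p.2 (ℓ + 1)
    · exact ⟨0, Or.inl h⟩
    · push Not at h
      obtain ⟨k, hk⟩ := h
      exact ⟨k, Or.inr hk⟩
  choose κ hκ using h1
  let K := Finset.univ.sup κ
  let B := Finset.univ.sup (fun H0 : SimpleGraph (Fin (2 * t)) =>
    (Finset.range (K + 2)).sup (fun ℓ => totalWalks H0 (ℓ + 1)))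
  refine ⟨K, B, fun n H H' hH hH' => ⟨?_, ?_⟩⟩
  · obtain ⟨H0, h0⟩ := aux_small H hH
    obtain ⟨H0', h0'⟩ := aux_small H' hH'
    rcases hκ (H0, H0') with h | h
    · left; intro ℓ; rw [h0, h0']; exact h ℓ
    · right
      refine ⟨κ (H0, H0'), Finset.le_sup (f := κ) (Finset.mem_univ _), ?_⟩
      rw [h0, h0']; exact h
  · intro ℓ hℓ
    obtain ⟨H0, h0⟩ := aux_small H hH
    rw [h0]
    have a1 : totalWalks H0 (ℓ + 1) ≤
        (Finset.range (K + 2)).sup (fun ℓ => totalWalks H0 (ℓ + 1)) :=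
      Finset.le_sup (f := fun ℓ => totalWalks H0 (ℓ + 1)) (Finset.mem_range.mpr (by omega))
    exact a1.trans (Finset.le_sup (f := fun H0 : SimpleGraph (Fin (2 * t)) =>
      (Finset.range (K + 2)).sup (fun ℓ => totalWalks H0 (ℓ + 1))) (Finset.mem_univ H0))

lemma aux_h_le {n r : ℕ} (i : Fin r) {ρ ρ' : ℝ} (hρ : 0 < ρ) (h : ρ ≤ ρ') :
    (∑ u ∈ Finset.univ.filter (fun u : Fin n => ¬ (u : ℕ) % r = i), 1 / (ρ' +
      ((Finset.univ.filter (fun v : Fin n => (v : ℕ) % r = (u : ℕ) % r)).card : ℝ))) ≤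
    ∑ u ∈ Finset.univ.filter (fun u : Fin n => ¬ (u : ℕ) % r = i), 1 / (ρ +
      ((Finset.univ.filter (fun v : Fin n => (v : ℕ) % r = (u : ℕ) % r)).card : ℝ)) := by
  refine Finset.sum_le_sum fun u _ => ?_
  apply one_div_le_one_div_of_le
  · positivity
  · linarith

lemma aux_h_lt {n r : ℕ} (i : Fin r) {ρ ρ' : ℝ} (hρ : 0 < ρ) (h : ρ < ρ')
    (hne : (∑ u ∈ Finset.univ.filter (fun u : Fin n => ¬ (u : ℕ) % r = i), 1 / (ρ +
      ((Finset.univ.filter (fun v : Fin n => (v : ℕ) % r = (u : ℕ) % r)).card : ℝ))) ≠ 0) :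
    (∑ u ∈ Finset.univ.filter (fun u : Fin n => ¬ (u : ℕ) % r = i), 1 / (ρ' +
      ((Finset.univ.filter (fun v : Fin n => (v : ℕ) % r = (u : ℕ) % r)).card : ℝ))) <
    ∑ u ∈ Finset.univ.filter (fun u : Fin n => ¬ (u : ℕ) % r = i), 1 / (ρ +
      ((Finset.univ.filter (fun v : Fin n => (v : ℕ) % r = (u : ℕ) % r)).card : ℝ)) := by
  refine Finset.sum_lt_sum_of_nonempty (Finset.nonempty_of_sum_ne_zero hne) fun u _ => ?_
  apply one_div_lt_one_div_of_lt
  · positivity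
  · linarith

lemma aux_cmp_lt {n r t B k : ℕ} (hr : 2 ≤ r) (hnr : r ≤ n) (i : Fin r)
    {G G' : SimpleGraph (Fin n)}
    (hG : G ∈ TuranFam n r t) (hin : inPart n r i G)
    (hG' : G' ∈ TuranFam n r t) (hin' : inPart n r i G')
    (hρ : (t : ℝ) < spectralRad G) (hρ' : (t : ℝ) + B < spectralRad G')
    (heq : ∀ ℓ < k, totalWalks (emb n r G) (ℓ + 1) = totalWalks (emb n r G') (ℓ + 1))
    (hk : totalWalks (emb n r G') (k + 1) < totalWalks (emb n r G) (k + 1))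
    (hB : totalWalks (emb n r G') (k + 2) ≤ B) : spectralRad G' < spectralRad G := by
  have ht0 : (0 : ℝ) ≤ t := Nat.cast_nonneg t
  have hB0 : (0 : ℝ) ≤ B := Nat.cast_nonneg B
  obtain ⟨D, c, h1, h2, h3, h4, h5, h6, h7⟩ := aux_D hr hnr i hG hin hρ
  obtain ⟨D', c', h1', h2', h3', h4', h5', h6', h7'⟩ := aux_D hr hnr i hG' hin' (by linarith)
  by_contra! hcon
  have hlt : D' 0 < D 0 := by
    refine aux_seq_lt (by linarith) hcon h1 h2 h2' (k + 1) ?_ ?_ ?_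
    · intro ℓ hℓ
      cases ℓ with
      | zero => rw [h5, h5']
      | succ ℓ => rw [h6, h6', heq ℓ (by omega)]
    · rw [h6, h6']; exact hk
    · have a := h3' (k + 1 + 1)
      rw [h6'] at a
      have b : (totalWalks (emb n r G') (k + 1 + 1) : ℝ) ≤ B := by exact_mod_cast hB
      by_contra! hc
      have d := mul_le_mul_of_nonneg_right hc (by linarith : 0 ≤ spectralRad G' - t)
      linarith
  have hle := aux_h_le (n := n) i (by linarith) hcon
  have p1 := h1 0
  have p2 := h1' 0
  have hpos := pos_of_mul_pos_right (h7.symm ▸ zero_lt_one) (by linarith : 0 ≤ 1 + D 0)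
  have e1 := mul_le_mul_of_nonneg_left hle (by linarith : 0 ≤ 1 + D' 0)
  have e2 := mul_lt_mul_of_pos_right (by linarith : 1 + D' 0 < 1 + D 0) hpos
  linarith

lemma aux_cmp_eq {n r t : ℕ} (hr : 2 ≤ r) (hnr : r ≤ n) (i : Fin r)
    {G G' : SimpleGraph (Fin n)}
    (hG : G ∈ TuranFam n r t) (hin : inPart n r i G)
    (hG' : G' ∈ TuranFam n r t) (hin' : inPart n r i G')
    (hρ : (t : ℝ) < spectralRad G) (hρ' : (t : ℝ) < spectralRad G')
    (heq : ∀ ℓ, totalWalks (emb n r G) (ℓ + 1) = totalWalks (emb n r G') (ℓ + 1)) :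
    spectralRad G' ≤ spectralRad G := by
  have ht0 : (0 : ℝ) ≤ t := Nat.cast_nonneg t
  obtain ⟨D, c, h1, h2, h3, h4, h5, h6, h7⟩ := aux_D hr hnr i hG hin hρ
  obtain ⟨D', c', h1', h2', h3', h4', h5', h6', h7'⟩ := aux_D hr hnr i hG' hin' hρ'
  by_contra! hcon
  have hcc : c' = c := by
    ext ℓ
    cases ℓ with
    | zero => rw [h5, h5']
    | succ ℓ => rw [h6, h6', heq ℓ]
  subst hcc
  have hle : D' 0 ≤ D 0 :=
    aux_seq_eq (C := n) ht0 hρ' hcon.le h1 h2 h2' h3' (fun ℓ => by exact_mod_cast h4 ℓ)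
  have p1 := h1 0
  have p2 := h1' 0
  have hpos := pos_of_mul_pos_right (h7.symm ▸ zero_lt_one) (by linarith : 0 ≤ 1 + D 0)
  have hlt := aux_h_lt (n := n) i (by linarith) hcon hpos.ne'
  have e1 := mul_lt_mul_of_pos_left hlt (by linarith : 0 < 1 + D' 0)
  have e2 := mul_le_mul_of_nonneg_right (by linarith : 1 + D' 0 ≤ 1 + D 0) hpos.le
  linarith

lemma aux_EX_agree {V : Type*} [Fintype V] (ℋ : Set (SimpleGraph V)) (k : ℕ)
    {H H' : SimpleGraph V} (h : H ∈ EXiter k ℋ) (h' : H' ∈ EXiter k ℋ) :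
    ∀ ℓ < k, totalWalks H (ℓ + 1) = totalWalks H' (ℓ + 1) := by
  induction k with
  | zero => intro ℓ hℓ; omega
  | succ k ih =>
    intro ℓ hℓ
    rw [EXiter] at h h'
    rcases Nat.lt_succ_iff_lt_or_eq.mp hℓ with h1 | rfl
    · exact ih h.1 h'.1 ℓ h1
    · exact le_antisymm (h'.2 H h.1) (h.2 H' h'.1)

lemma aux_EX_mem {V : Type*} [Fintype V] (ℋ : Set (SimpleGraph V)) (k : ℕ)
    {H H' : SimpleGraph V} (h : H ∈ EXiter k ℋ) (h' : H' ∈ ℋ)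
    (heq : ∀ ℓ < k, totalWalks H (ℓ + 1) = totalWalks H' (ℓ + 1)) : H' ∈ EXiter k ℋ := by
  induction k with
  | zero => exact h'
  | succ k ih =>
    rw [EXiter] at h ⊢
    refine ⟨ih h.1 fun ℓ hℓ => heq ℓ (by omega), fun H'' h'' => ?_⟩
    rw [← heq k (by omega)]
    exact h.2 H'' h''

/-- (Theorem 1.4 (ii).) For `t ≥ 1`, `r ≥ 2` and sufficiently large `n`:
if `𝒢` is a normal subset of `𝒯_{n,r,t}` with
`{G ∈ 𝒢 : H^G ∈ EX²(ℋ^𝒢)} ⊆ ∪_i 𝒢_i`, then for any `i` and any `G ∈ 𝒢_i`,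
`G ∈ SPEX(𝒢_i)` iff `H^G ∈ EX^∞(ℋ^{𝒢_i})`. -/
theorem stmt_13 (t r : ℕ) (ht : 1 ≤ t) (hr : 2 ≤ r) :
    ∃ N : ℕ, ∀ n : ℕ, N ≤ n →
      ∀ 𝒢 : Set (SimpleGraph (Fin n)), 𝒢 ⊆ TuranFam n r t →
        IsNormal n r 𝒢 →
        {G ∈ 𝒢 | emb n r G ∈ EXiter 2 (emb n r '' 𝒢)} ⊆ ⋃ i : Fin r, classSet n r 𝒢 i →
        ∀ i : Fin r, ∀ G ∈ classSet n r 𝒢 i,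
          (G ∈ SPEXset (classSet n r 𝒢 i) ↔
            emb n r G ∈ ⋂ ℓ : ℕ, EXiter ℓ (emb n r '' classSet n r 𝒢 i)) := by
  obtain ⟨K, B, hKB⟩ := aux_bounds t
  refine ⟨r * (t + B + 1), fun n hn 𝒢 h𝒢 _ _ i G hGi => ?_⟩
  have hnr : r ≤ n := le_trans (Nat.le_mul_of_pos_right r (by omega)) hn
  have hbig : ∀ G' ∈ classSet n r 𝒢 i, (t : ℝ) + B < spectralRad G' := by
    intro G' hG'
    refine lt_of_lt_of_le ?_ (aux_rho_ge hr (by omega) (h𝒢 hG'.1))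
    have : t + B + 1 ≤ n / r := by
      rw [Nat.le_div_iff_mul_le (by omega), mul_comm]; exact hn
    exact_mod_cast this
  have hB0 : (0 : ℝ) ≤ B := Nat.cast_nonneg B
  have hbig' : ∀ G' ∈ classSet n r 𝒢 i, (t : ℝ) < spectralRad G' := fun G' hG' => by
    have := hbig G' hG'
    linarith
  -- strict comparison by the first difference
  have hcmp : ∀ G₁ ∈ classSet n r 𝒢 i, ∀ G₂ ∈ classSet n r 𝒢 i, ∀ k,
      (∀ ℓ < k, totalWalks (emb n r G₁) (ℓ + 1) = totalWalks (emb n r G₂) (ℓ + 1)) →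
      totalWalks (emb n r G₂) (k + 1) < totalWalks (emb n r G₁) (k + 1) →
      spectralRad G₂ < spectralRad G₁ := by
    intro G₁ h₁ G₂ h₂ k heq hk
    have hb := hKB n (emb n r G₂) (emb n r G₁) (h𝒢 h₂.1).2.2 (h𝒢 h₁.1).2.2
    have hkK : k ≤ K := by
      rcases hb.1 with h | ⟨j, hj, hne⟩
      · exact absurd (h k) hk.ne
      · by_contra! hc
        exact hne (heq j (by omega)).symm
    exact aux_cmp_lt hr hnr i (h𝒢 h₁.1) h₁.2 (h𝒢 h₂.1) h₂.2 (hbig' _ h₁) (hbig _ h₂) heq hk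
      (hb.2 (k + 1) (by omega))
  constructor
  · intro hS
    rw [Set.mem_iInter]
    intro ℓ
    induction ℓ with
    | zero => exact ⟨G, hGi, rfl⟩
    | succ ℓ ih =>
      rw [EXiter]
      refine ⟨ih, fun H' hH' => ?_⟩
      by_contra! hc
      have hmem : ∀ k, EXiter k (emb n r '' classSet n r 𝒢 i) ⊆ emb n r '' classSet n r 𝒢 i := by
        intro k
        induction k with
        | zero => exact subset_rfl
        | succ k ihk => exact fun x hx => ihk hx.1
      obtain ⟨G', hG', rfl⟩ := hmem ℓ hH'
      have h1 := hcmp G' hG' G hGi ℓ (aux_EX_agree _ ℓ hH' ih) hc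
      exact absurd (hS.2 G' hG') (not_le.mpr h1)
  · intro hE
    rw [Set.mem_iInter] at hE
    refine ⟨hGi, fun G' hG' => ?_⟩
    by_cases hall : ∀ ℓ, totalWalks (emb n r G) (ℓ + 1) = totalWalks (emb n r G') (ℓ + 1)
    · exact aux_cmp_eq hr hnr i (h𝒢 hGi.1) hGi.2 (h𝒢 hG'.1) hG'.2 (hbig' _ hGi) (hbig' _ hG') hall
    · push Not at hall
      have hlt : ∀ ℓ < Nat.find hall,
          totalWalks (emb n r G) (ℓ + 1) = totalWalks (emb n r G') (ℓ + 1) := by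
        intro ℓ hℓ
        have := Nat.find_min hall hℓ
        push Not at this
        exact this
      have hne := Nat.find_spec hall
      have hm := aux_EX_mem _ (Nat.find hall) (hE _) ⟨G', hG', rfl⟩ hlt
      have hle := (hE (Nat.find hall + 1)).2 _ hm
      exact (hcmp G hGi G' hG' _ hlt (lt_of_le_of_ne hle (Ne.symm hne))).le
end

section
/- For integers $k \ge 2$ and $r \ge 2$, there exists $N$ such that for all $n \ge N$ the following holds: a graph $G \in \mathcal{T}_{n,r,k-1}$ has maximum spectral radius among all graphs in $\mathcal{T}_{n,r,k-1}$ if and only if all $k-1$ embedded edges of $G$ lie inside a single part of size $\lfloor n/r \rfloor$ of the Turán graph $T(n,r)$, and the subgraph induced by these $k-1$ edges is a triangle $K_3$ when $k = 4$ and a star $K_{1,k-1}$ otherwise. -/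
open Finset Matrix SimpleGraph
open scoped Classical

/-! ### Spectral lemmas -/

/-- Sum of `x` over the neighbours of `v`. -/
noncomputable def nsum {V : Type*} [Fintype V] (G : SimpleGraph V) (x : V → ℝ) (v : V) : ℝ :=
  ∑ u, if G.Adj v u then x u else 0

/-- The set of real eigenvalues. -/
def eigSet {V : Type*} [Fintype V] (G : SimpleGraph V) : Set ℝ :=
  {μ : ℝ | ∃ x : V → ℝ, x ≠ 0 ∧ (G.adjMatrix ℝ) *ᵥ x = μ • x}

theorem adj_mulVec {V : Type*} [Fintype V] (G : SimpleGraph V) (x : V → ℝ) (v : V) :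
    ((G.adjMatrix ℝ) *ᵥ x) v = nsum G x v := by
  simp [nsum, Matrix.mulVec, dotProduct, SimpleGraph.adjMatrix_apply]

theorem nsum_nonneg {V : Type*} [Fintype V] (G : SimpleGraph V) (x : V → ℝ) (hx : ∀ v, 0 ≤ x v)
    (v : V) : 0 ≤ nsum G x v :=
  Finset.sum_nonneg fun u _ => by split_ifs <;> simp [hx]

theorem eig_key {V : Type*} [Fintype V] (G : SimpleGraph V) (x : V → ℝ) (hx : ∀ v, 0 < x v)
    (lam : ℝ) (h : lam ∈ eigSet G) : ∃ v, lam * x v ≤ nsum G x v := by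
  obtain ⟨w, hw, hA⟩ := h
  obtain ⟨v0, hv0⟩ : ∃ v, w v ≠ 0 := by
    by_contra hcon
    push Not at hcon
    exact hw (funext hcon)
  obtain ⟨v, -, hv⟩ := Finset.exists_max_image Finset.univ (fun v => |w v| / x v) ⟨v0, by simp⟩
  refine ⟨v, ?_⟩
  set m := |w v| / x v with hm
  have hmpos : 0 < m := lt_of_lt_of_le (div_pos (abs_pos.2 hv0) (hx v0)) (hv v0 (by simp))
  have hle : ∀ u, |w u| ≤ m * x u := fun u => by
    have := hv u (by simp)
    rwa [div_le_iff₀ (hx u)] at this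
  have hwv : |w v| = m * x v := by rw [hm]; field_simp [(hx v).ne']
  have h1 : nsum G w v = lam * w v := by
    rw [← adj_mulVec, hA]; simp
  have h2 : |nsum G w v| ≤ m * nsum G x v := by
    unfold nsum
    rw [Finset.mul_sum]
    refine (Finset.abs_sum_le_sum_abs _ _).trans (Finset.sum_le_sum fun u _ => ?_)
    split_ifs
    · exact hle u
    · simp
  rw [h1, abs_mul, hwv] at h2
  have h3 : |lam| * x v ≤ nsum G x v := by
    have : m * (|lam| * x v) ≤ m * nsum G x v := by linarith
    exact le_of_mul_le_mul_left this hmpos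
  have := mul_le_mul_of_nonneg_right (le_abs_self lam) (hx v).le
  linarith

theorem eig_bdd {V : Type*} [Fintype V] (G : SimpleGraph V) : BddAbove (eigSet G) := by
  refine ⟨Fintype.card V, fun lam h => ?_⟩
  obtain ⟨v, hv⟩ := eig_key G (fun _ => 1) (fun _ => one_pos) lam h
  have : nsum G (fun _ => 1) v ≤ Fintype.card V := by
    unfold nsum
    refine (Finset.sum_le_sum (g := fun _ => (1 : ℝ)) fun u _ => ?_).trans (by simp)
    split_ifs <;> simp
  linarith

theorem eig_nonempty {V : Type*} [Fintype V] [Nonempty V] (G : SimpleGraph V) :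
    (eigSet G).Nonempty := by
  have hH : (G.adjMatrix ℝ).IsHermitian := by
    rw [Matrix.IsHermitian, Matrix.conjTranspose_eq_transpose_of_trivial]
    exact G.isSymm_adjMatrix
  obtain ⟨j⟩ := ‹Nonempty V›
  refine ⟨hH.eigenvalues j, (hH.eigenvectorBasis j).ofLp, ?_, hH.mulVec_eigenvectorBasis j⟩
  intro h0
  have := hH.eigenvectorBasis.orthonormal.ne_zero j
  apply this
  ext i
  simpa using congrFun h0 i

/-- Upper bound on the spectral radius, strict version. -/
theorem spec_lt {V : Type*} [Fintype V] [Nonempty V] (G : SimpleGraph V) (x : V → ℝ)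
    (hx : ∀ v, 0 < x v) (μ : ℝ) (h : ∀ v, nsum G x v < μ * x v) : spectralRad G < μ := by
  obtain ⟨v0, -, hv0⟩ := Finset.exists_max_image Finset.univ (fun v => nsum G x v / x v)
    Finset.univ_nonempty
  have h1 : spectralRad G ≤ nsum G x v0 / x v0 := by
    refine csSup_le (eig_nonempty G) fun lam hl => ?_
    obtain ⟨v, hv⟩ := eig_key G x hx lam hl
    refine le_trans ?_ (hv0 v (by simp))
    rwa [le_div_iff₀ (hx v)]
  refine h1.trans_lt ?_
  rw [div_lt_iff₀ (hx v0)]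
  exact h v0

theorem rayleigh {V : Type*} [Fintype V] (G : SimpleGraph V) (x : V → ℝ) :
    ∑ v, x v * nsum G x v ≤ spectralRad G * ∑ v, x v * x v := by
  set ρ := spectralRad G with hρ
  have hH : (ρ • (1 : Matrix V V ℝ) - G.adjMatrix ℝ).IsHermitian := by
    rw [Matrix.IsHermitian, Matrix.conjTranspose_eq_transpose_of_trivial, Matrix.transpose_sub,
      G.isSymm_adjMatrix]
    simp
  have hP : (ρ • (1 : Matrix V V ℝ) - G.adjMatrix ℝ).PosSemidef := by
    rw [hH.posSemidef_iff_eigenvalues_nonneg]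
    intro j
    have h := hH.mulVec_eigenvectorBasis j
    have hmem : ρ - hH.eigenvalues j ∈ eigSet G := by
      refine ⟨(hH.eigenvectorBasis j).ofLp, ?_, ?_⟩
      · intro h0
        have := hH.eigenvectorBasis.orthonormal.ne_zero j
        apply this
        ext i
        simpa using congrFun h0 i
      · rw [Matrix.sub_mulVec, Matrix.smul_mulVec, Matrix.one_mulVec] at h
        rw [sub_smul, ← h]
        abel
    have := le_csSup (eig_bdd G) hmem
    have h2 : sSup (eigSet G) = ρ := rfl
    rw [h2] at this
    simp only [Pi.zero_apply]
    linarith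
  have := hP.dotProduct_mulVec_nonneg x
  rw [Matrix.sub_mulVec, Matrix.smul_mulVec, Matrix.one_mulVec] at this
  simp only [dotProduct, star_trivial, Pi.sub_apply, Pi.smul_apply, adj_mulVec, smul_eq_mul,
    mul_sub, Finset.sum_sub_distrib] at this
  rw [Finset.mul_sum]
  have h3 : ∑ v, ρ * (x v * x v) = ∑ v, x v * (ρ * x v) :=
    Finset.sum_congr rfl fun v _ => by ring
  linarith

theorem le_spec {V : Type*} [Fintype V] [Nonempty V] (G : SimpleGraph V) (x : V → ℝ)
    (hx : ∀ v, 0 < x v) (μ : ℝ) (h : ∀ v, μ * x v ≤ nsum G x v) : μ ≤ spectralRad G := by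
  have h1 := rayleigh G x
  have hpos : 0 < ∑ v, x v * x v :=
    Finset.sum_pos (fun v _ => mul_pos (hx v) (hx v)) Finset.univ_nonempty
  have h2 : μ * ∑ v, x v * x v ≤ ∑ v, x v * nsum G x v := by
    rw [Finset.mul_sum]
    refine Finset.sum_le_sum fun v _ => ?_
    have := mul_le_mul_of_nonneg_left (h v) (hx v).le
    linarith
  exact le_of_mul_le_mul_right (h2.trans h1) hpos

theorem lt_spec {V : Type*} [Fintype V] [Nonempty V] (G : SimpleGraph V) (x : V → ℝ)
    (hx : ∀ v, 0 < x v) (μ : ℝ) (h : ∀ v, μ * x v < nsum G x v) : μ < spectralRad G := by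
  have h1 := rayleigh G x
  have hpos : 0 < ∑ v, x v * x v :=
    Finset.sum_pos (fun v _ => mul_pos (hx v) (hx v)) Finset.univ_nonempty
  have h2 : μ * ∑ v, x v * x v < ∑ v, x v * nsum G x v := by
    rw [Finset.mul_sum]
    refine Finset.sum_lt_sum_of_nonempty Finset.univ_nonempty fun v _ => ?_
    have := mul_lt_mul_of_pos_left (h v) (hx v)
    linarith
  exact lt_of_mul_lt_mul_right (h2.trans_le h1) hpos.le

/-! ### Multipartite structure -/

/-- Sum over a part. -/
noncomputable def psum {V I : Type*} [Fintype V] (p : V → I) (y : V → ℝ) (j : I) : ℝ :=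
  ∑ v, if p v = j then y v else 0

theorem sum_psum {V I : Type*} [Fintype V] [Fintype I] (p : V → I) (y : V → ℝ) :
    ∑ j, psum p y j = ∑ v, y v := by
  unfold psum
  rw [Finset.sum_comm]
  simp

theorem psum_nonneg {V I : Type*} [Fintype V] (p : V → I) (y : V → ℝ) (hy : ∀ v, 0 ≤ y v)
    (j : I) : 0 ≤ psum p y j :=
  Finset.sum_nonneg fun u _ => by split_ifs <;> simp [hy]

/-- The function `Φ`. -/
noncomputable def Phi {V I : Type*} [Fintype V] [Fintype I] (p : V → I) (y : V → ℝ) : ℝ :=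
  ∑ j, psum p y j / (1 + psum p y j)

theorem nsum_test {V I : Type*} [Fintype V] [Fintype I] (p : V → I) (G H : SimpleGraph V)
    (hH : ∀ u v, H.Adj u v → p u = p v) (hG : ∀ u v, G.Adj u v ↔ p u ≠ p v ∨ H.Adj u v)
    (y : V → ℝ) (v : V) :
    nsum G (fun v => y v / (1 + psum p y (p v))) v =
      Phi p y - psum p y (p v) / (1 + psum p y (p v)) +
        nsum H y v / (1 + psum p y (p v)) := by
  set x : V → ℝ := fun v => y v / (1 + psum p y (p v)) with hx
  have h1 : Phi p y = ∑ u, x u := by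
    rw [← sum_psum p x]
    unfold Phi
    refine Finset.sum_congr rfl fun j _ => ?_
    conv_lhs => rw [psum, Finset.sum_div]
    refine Finset.sum_congr rfl fun u _ => ?_
    split_ifs with hu
    · simp [hx, hu, psum]
    · simp
  have h2 : psum p y (p v) / (1 + psum p y (p v)) = ∑ u, if p u = p v then x u else 0 := by
    conv_lhs => rw [psum, Finset.sum_div]
    refine Finset.sum_congr rfl fun u _ => ?_
    split_ifs with hu
    · simp [hx, hu, psum]
    · simp
  have h3 : nsum H y v / (1 + psum p y (p v)) = ∑ u, if H.Adj v u then x u else 0 := by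
    conv_lhs => rw [nsum, Finset.sum_div]
    refine Finset.sum_congr rfl fun u _ => ?_
    split_ifs with hu
    · simp [hx, hH v u hu]
    · simp
  rw [h1, h2, h3, ← Finset.sum_sub_distrib, ← Finset.sum_add_distrib, nsum]
  refine Finset.sum_congr rfl fun u _ => ?_
  by_cases h : p u = p v
  · have : G.Adj v u ↔ H.Adj v u := by rw [hG]; simp [h.symm]
    simp [h, this]
  · have ha : G.Adj v u := (hG v u).2 (Or.inl fun h' => h h'.symm)
    have hb : ¬ H.Adj v u := fun h' => h (hH v u h').symm
    simp [h, ha, hb]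

theorem Phi_ge_one {V I : Type*} [Fintype V] [Nonempty V] [Fintype I] (p : V → I)
    (G H : SimpleGraph V)
    (hH : ∀ u v, H.Adj u v → p u = p v) (hG : ∀ u v, G.Adj u v ↔ p u ≠ p v ∨ H.Adj u v)
    (y : V → ℝ) (hy : ∀ v, 0 < y v)
    (hs : ∀ v, nsum H y v ≤ spectralRad G * y v - 1) : 1 ≤ Phi p y := by
  by_contra hcon
  push Not at hcon
  have hf : ∀ j, 0 < 1 + psum p y j := fun j => by
    have := psum_nonneg p y (fun v => (hy v).le) j
    linarith
  have := spec_lt G (fun v => y v / (1 + psum p y (p v))) (fun v => div_pos (hy v) (hf _))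
    (spectralRad G) (fun v => by
      rw [nsum_test p G H hH hG y v]
      have h0 := hf (p v)
      have h1 : nsum H y v / (1 + psum p y (p v)) ≤
          (spectralRad G * y v - 1) / (1 + psum p y (p v)) :=
        div_le_div_of_nonneg_right (hs v) h0.le
      have h2 : (spectralRad G * y v - 1) / (1 + psum p y (p v)) =
        spectralRad G * (y v / (1 + psum p y (p v))) - 1 +
          psum p y (p v) / (1 + psum p y (p v)) := by
        field_simp; ring
      linarith)
  exact lt_irrefl _ this

theorem spec_ge {V I : Type*} [Fintype V] [Nonempty V] [Fintype I] (p : V → I)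
    (G H : SimpleGraph V)
    (hH : ∀ u v, H.Adj u v → p u = p v) (hG : ∀ u v, G.Adj u v ↔ p u ≠ p v ∨ H.Adj u v)
    (y : V → ℝ) (hy : ∀ v, 0 < y v) (μ : ℝ)
    (hs : ∀ v, μ * y v - 1 ≤ nsum H y v) (hP : 1 ≤ Phi p y) :
    μ ≤ spectralRad G ∧ (1 < Phi p y → μ < spectralRad G) := by
  have hf : ∀ j, 0 < 1 + psum p y j := fun j => by
    have := psum_nonneg p y (fun v => (hy v).le) j
    linarith
  have key : ∀ v, μ * (y v / (1 + psum p y (p v))) + (Phi p y - 1) ≤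
      nsum G (fun v => y v / (1 + psum p y (p v))) v := fun v => by
    rw [nsum_test p G H hH hG y v]
    have h0 := hf (p v)
    have h1 : (μ * y v - 1) / (1 + psum p y (p v)) ≤ nsum H y v / (1 + psum p y (p v)) :=
      div_le_div_of_nonneg_right (hs v) h0.le
    have h2 : (μ * y v - 1) / (1 + psum p y (p v)) =
        μ * (y v / (1 + psum p y (p v))) - 1 + psum p y (p v) / (1 + psum p y (p v)) := by
      field_simp; ring
    linarith
  refine ⟨le_spec G (fun v => y v / (1 + psum p y (p v))) (fun v => div_pos (hy v) (hf _)) μ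
      fun v => ?_, fun h =>
    lt_spec G (fun v => y v / (1 + psum p y (p v))) (fun v => div_pos (hy v) (hf _)) μ
      fun v => ?_⟩
  · have := key v; linarith
  · have := key v; linarith

/-! ### Test vectors -/

theorem shape_test {V I W : Type*} [Fintype V] [Fintype W] (p : V → I)
    (H : SimpleGraph V) (Γ : SimpleGraph W) (φ : H.induce H.support ≃g Γ) (i : I)
    (hi : ∀ u v, H.Adj u v → p u = i) (μ : ℝ) (hμ : 0 < μ) (z : W → ℝ) (hz0 : ∀ a, 0 < z a)
    (hz : ∀ a, nsum Γ z a = μ * z a - 1) :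
    ∃ y : V → ℝ, (∀ v, 0 < y v) ∧ (∀ v, nsum H y v = μ * y v - 1) ∧
      ∀ j, psum p y j = psum p (fun _ => 1) j / μ +
        if j = i then (∑ a, z a - Fintype.card W / μ) else 0 := by
  set y : V → ℝ := fun v => if h : v ∈ H.support then z (φ ⟨v, h⟩) else 1 / μ with hy
  set em : W → V := fun a => (φ.symm a : V) with hem
  have hinj : Function.Injective em := fun a b h => φ.symm.injective (Subtype.ext h)
  have hrange : ∀ v, v ∉ Set.range em → v ∉ H.support := fun v hv hs =>
    hv ⟨φ ⟨v, hs⟩, by simp [hem]⟩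
  have hyem : ∀ a, y (em a) = z a := fun a => by
    have : em a ∈ H.support := (φ.symm a).2
    simp only [hy, this, dite_true]
    congr 1
    exact φ.apply_symm_apply a
  have hadj : ∀ a b, H.Adj (em a) (em b) ↔ Γ.Adj a b := fun a b => by
    have := φ.symm.map_adj_iff (v := a) (w := b)
    rw [← this]
    rfl
  refine ⟨y, fun v => ?_, fun v => ?_, fun j => ?_⟩
  · simp only [hy]
    split_ifs
    · exact hz0 _
    · positivity
  · by_cases hv : v ∈ H.support
    · obtain ⟨a, rfl⟩ : ∃ a, em a = v := by
        by_contra hcon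
        exact hrange v (fun ⟨a, ha⟩ => hcon ⟨a, ha⟩) hv
      rw [hyem, ← hz a]
      unfold nsum
      symm
      refine Fintype.sum_of_injective em hinj _ _ (fun u hu => ?_) fun b => ?_
      · rw [if_neg]
        intro h
        exact hrange u hu (H.mem_support.2 ⟨_, h.symm⟩)
      · simp only [hadj, hyem]
    · have h1 : y v = 1 / μ := by simp [hy, hv]
      rw [h1, mul_one_div_cancel hμ.ne', sub_self]
      unfold nsum
      refine Finset.sum_eq_zero fun u _ => ?_
      rw [if_neg]
      intro h
      exact hv (H.mem_support.2 ⟨_, h⟩)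
  · have hsupp : ∀ v, v ∈ H.support → p v = i := fun v hv => by
      obtain ⟨w, hw⟩ := H.mem_support.1 hv
      exact hi v w hw
    have e1 : psum p y j - psum p (fun _ => 1) j / μ =
        ∑ v, if p v = j then (y v - 1 / μ) else 0 := by
      unfold psum
      rw [Finset.sum_div, ← Finset.sum_sub_distrib]
      refine Finset.sum_congr rfl fun v _ => ?_
      split_ifs <;> simp
    have e2 : (∑ v, if p v = j then (y v - 1 / μ) else 0) =
        if j = i then (∑ a, z a - Fintype.card W / μ) else 0 := by
      split_ifs with hj
      · have : ∑ a, z a - Fintype.card W / μ = ∑ a, (z a - 1 / μ) := by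
          rw [Finset.sum_sub_distrib]
          simp [div_eq_mul_inv]
        rw [this]
        symm
        refine Fintype.sum_of_injective em hinj _ _ (fun u hu => ?_) fun b => ?_
        · have := hrange u hu
          simp [hy, this]
        · have : p (em b) = j := by rw [hj]; exact hsupp _ (φ.symm b).2
          simp [this, hyem]
      · refine Finset.sum_eq_zero fun v _ => ?_
        by_cases hv : v ∈ H.support
        · rw [if_neg]
          rw [hsupp v hv]
          exact fun h => hj h.symm
        · simp [hy, hv]
    linarith

theorem nsum_mono {V : Type*} [Fintype V] (G : SimpleGraph V) (x y : V → ℝ) (v : V)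
    (h : ∀ u, G.Adj v u → x u ≤ y u) : nsum G x v ≤ nsum G y v :=
  Finset.sum_le_sum fun u _ => by
    split_ifs with hu
    · exact h u hu
    · exact le_rfl

theorem nsum_le_sum {V : Type*} [Fintype V] (G : SimpleGraph V) (x : V → ℝ) (v : V)
    (h : ∀ u, 0 ≤ x u) : nsum G x v ≤ ∑ u, x u :=
  Finset.sum_le_sum fun u _ => by
    split_ifs with hu
    · exact le_rfl
    · exact h u

/-- Degrees as reals. -/
noncomputable def dg {V : Type*} [Fintype V] (H : SimpleGraph V) : V → ℝ := nsum H (fun _ => 1)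
/-- Walks of length two. -/
noncomputable def dg2 {V : Type*} [Fintype V] (H : SimpleGraph V) : V → ℝ := nsum H (dg H)

theorem dg_nonneg {V : Type*} [Fintype V] (H : SimpleGraph V) (v : V) : 0 ≤ dg H v :=
  nsum_nonneg H _ (fun _ => zero_le_one) v

theorem dg2_nonneg {V : Type*} [Fintype V] (H : SimpleGraph V) (v : V) : 0 ≤ dg2 H v :=
  nsum_nonneg H _ (dg_nonneg H) v

theorem one_le_dg {V : Type*} [Fintype V] (H : SimpleGraph V) (u v : V) (h : H.Adj u v) :
    1 ≤ dg H u := by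
  unfold dg nsum
  have := Finset.single_le_sum (f := fun w => if H.Adj u w then (1 : ℝ) else 0)
    (fun w _ => by split_ifs <;> simp) (Finset.mem_univ v)
  simpa [h] using this

theorem upper_test {V I : Type*} [Fintype V] (p : V → I) (H : SimpleGraph V) (t : ℝ) (ht : 0 ≤ t)
    (hd : ∑ v, dg H v = 2 * t) (μ : ℝ) (hμ : 0 < μ) (hμt : 4 * t ≤ μ) :
    ∃ y : V → ℝ, (∀ v, 0 < y v) ∧ (∀ v, nsum H y v ≤ μ * y v - 1) ∧
      ∀ j, psum p y j = psum p (fun _ => 1) j / μ +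
        (psum p (dg H) j / μ ^ 2 + (1 + 4 * t / μ) * psum p (dg2 H) j / μ ^ 3) := by
  refine ⟨fun v => 1 / μ + (dg H v / μ ^ 2 + (1 + 4 * t / μ) * dg2 H v / μ ^ 3), fun v => ?_,
    fun v => ?_, fun j => ?_⟩
  · have := dg_nonneg H v
    have := dg2_nonneg H v
    positivity
  · have hlin : nsum H (fun v => 1 / μ + (dg H v / μ ^ 2 + (1 + 4 * t / μ) * dg2 H v / μ ^ 3)) v
        = dg H v / μ + (dg2 H v / μ ^ 2 + (1 + 4 * t / μ) * nsum H (dg2 H) v / μ ^ 3) := by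
      conv_rhs => rw [dg2, dg]
      unfold nsum
      simp only [Finset.mul_sum, Finset.sum_div, ← Finset.sum_add_distrib]
      refine Finset.sum_congr rfl fun u _ => ?_
      split_ifs <;> simp [dg2, dg, nsum]
    rw [hlin]
    have h1 : nsum H (dg2 H) v ≤ 2 * t * dg2 H v := by
      have a1 : nsum H (dg2 H) v ≤ nsum H (fun _ => 2 * t) v :=
        nsum_mono H _ _ v fun u _ => by
          rw [← hd]
          exact nsum_le_sum H _ u (dg_nonneg H)
      have a2 : nsum H (fun _ => 2 * t) v = 2 * t * dg H v := by
        unfold dg nsum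
        rw [Finset.mul_sum]
        refine Finset.sum_congr rfl fun u _ => ?_
        split_ifs <;> simp
      have a3 : dg H v ≤ dg2 H v := nsum_mono H _ _ v fun u hu => one_le_dg H u v hu.symm
      rw [a2] at a1
      exact a1.trans (mul_le_mul_of_nonneg_left a3 (by linarith))
    have hw := dg2_nonneg H v
    have hε : 4 * t / μ ≤ 1 := by rw [div_le_one hμ]; exact hμt
    have hε0 : 0 ≤ 4 * t / μ := by positivity
    have h2 : (1 + 4 * t / μ) * nsum H (dg2 H) v ≤ 4 * t * dg2 H v := by
      have b1 : (1 + 4 * t / μ) * nsum H (dg2 H) v ≤ 2 * nsum H (dg2 H) v :=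
        mul_le_mul_of_nonneg_right (by linarith) (nsum_nonneg H _ (dg2_nonneg H) v)
      linarith
    have h3 : (1 + 4 * t / μ) * nsum H (dg2 H) v / μ ^ 3 ≤ 4 * t * dg2 H v / μ ^ 3 :=
      div_le_div_of_nonneg_right h2 (by positivity)
    have h4 : μ * (1 / μ + (dg H v / μ ^ 2 + (1 + 4 * t / μ) * dg2 H v / μ ^ 3)) - 1 =
      dg H v / μ + (dg2 H v / μ ^ 2 + 4 * t * dg2 H v / μ ^ 3) := by
      field_simp
      ring
    linarith
  · unfold psum
    simp only [Finset.mul_sum, Finset.sum_div, ← Finset.sum_add_distrib]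
    refine Finset.sum_congr rfl fun u _ => ?_
    split_ifs <;> simp

/-! ### Real analysis -/

/-- The map `x ↦ x / (1 + x)`. -/
noncomputable def gg (x : ℝ) : ℝ := x / (1 + x)

theorem gg_diff (b h : ℝ) (hb : 0 ≤ b) (hh : 0 ≤ h) :
    gg (b + h) - gg b = h / ((1 + b) * (1 + b + h)) := by
  unfold gg
  have h1 : 1 + b ≠ 0 := by positivity
  have h2 : 1 + b + h ≠ 0 := by positivity
  have h3 : 1 + (b + h) ≠ 0 := by positivity
  field_simp
  ring

theorem gg_upper (b h : ℝ) (hb : 0 ≤ b) (hh : 0 ≤ h) : gg (b + h) - gg b ≤ h / (1 + b) ^ 2 := by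
  rw [gg_diff b h hb hh]
  apply div_le_div_of_nonneg_left hh (by positivity)
  nlinarith

theorem gg_lower (b h : ℝ) (hb : 0 ≤ b) (hh : 0 ≤ h) :
    (h - h ^ 2) / (1 + b) ^ 2 ≤ gg (b + h) - gg b := by
  rw [gg_diff b h hb hh, div_le_div_iff₀ (by positivity) (by positivity)]
  have : h * (1 + b) ^ 2 - (h - h ^ 2) * ((1 + b) * (1 + b + h)) =
    (1 + b) * h ^ 2 * (b + h) := by ring
  have : 0 ≤ (1 + b) * h ^ 2 * (b + h) := by positivity
  linarith

theorem gg_lt {a b : ℝ} (ha : 0 ≤ a) (h : a < b) : gg a < gg b := by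
  unfold gg
  rw [div_lt_div_iff₀ (by linarith) (by linarith)]
  nlinarith

theorem gg_le {a b : ℝ} (ha : 0 ≤ a) (h : a ≤ b) : gg a ≤ gg b := by
  rcases h.eq_or_lt with rfl | h
  · exact le_rfl
  · exact (gg_lt ha h).le

theorem big_part (q μ h : ℝ) (hq : 0 ≤ q) (hμ : 1 ≤ μ) (hqμ : q ≤ 2 * μ) (hh : 0 ≤ h) :
    h / (1 + (q + 1) / μ) ^ 2 ≤ (h - h / (4 * μ)) / (1 + q / μ) ^ 2 := by
  have hμ0 : 0 < μ := by linarith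
  set s := 1 / μ with hs
  set c := q / μ with hc
  have e1 : (q + 1) / μ = c + s := by rw [hs, hc, add_div]
  have e2 : h - h / (4 * μ) = h * (1 - s / 4) := by rw [hs]; field_simp
  have s0 : 0 < s := by positivity
  have s1 : s ≤ 1 := by rw [hs, div_le_one hμ0]; exact hμ
  have c0 : 0 ≤ c := by positivity
  have c2 : c ≤ 2 := by rw [hc, div_le_iff₀ hμ0]; exact hqμ
  rw [e1, e2, div_le_div_iff₀ (by positivity) (by positivity), mul_assoc]
  apply mul_le_mul_of_nonneg_left _ hh
  have k1 : (1 - s / 4) * (1 + (c + s)) ^ 2 - (1 + c) ^ 2 =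
    (1 + c) * s * (2 - (1 + c) / 4 - s / 2) + s ^ 2 * (1 - s / 4) := by ring
  have k2 : 0 ≤ (1 + c) * s * (2 - (1 + c) / 4 - s / 2) := by
    apply mul_nonneg (by positivity); linarith
  have k3 : 0 ≤ s ^ 2 * (1 - s / 4) := by
    apply mul_nonneg (by positivity); linarith
  linarith

theorem phi_compare {I : Type*} [Fintype I] (N a b : I → ℝ) (q μ t h : ℝ) (hq : 0 ≤ q)
    (hqμ : q ≤ 2 * μ) (ht : 1 ≤ t)
    (hμ : 4 * (4 * t ^ 2 * (t + 1) + (2 * t + t * (t + 1)) ^ 2) < μ)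
    (hN : ∀ j, N j = q ∨ N j = q + 1) (ha : ∀ j, 0 ≤ a j) (hb : ∀ j, 0 ≤ b j)
    (hsa : ∑ j, a j = 2 * t) (hsb : ∑ j, b j ≤ t * (t + 1))
    (hcase : ∑ j, b j ≤ t * (t + 1) - 1 ∨ ∃ j, N j = q + 1 ∧ 1 ≤ a j)
    (hh : 2 * t / μ ^ 2 + t * (t + 1) / μ ^ 3 ≤ h) :
    ∑ j, gg (N j / μ + (a j / μ ^ 2 + (1 + 4 * t / μ) * b j / μ ^ 3)) <
      ∑ j, gg (N j / μ) + (gg (q / μ + h) - gg (q / μ)) := by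
  have hμ1 : 1 ≤ μ := by nlinarith
  have hμ0 : 0 < μ := by linarith
  set k : I → ℝ := fun j => a j / μ ^ 2 + (1 + 4 * t / μ) * b j / μ ^ 3 with hk
  have hk0 : ∀ j, 0 ≤ k j := fun j => by
    have := ha j
    have := hb j
    simp only [hk]
    positivity
  have hkj : ∀ j, a j / μ ^ 2 + (1 + 4 * t / μ) * b j / μ ^ 3 = k j := fun j => rfl
  simp only [hkj]
  set B := (1 + q / μ) ^ 2 with hB
  have hBpos : 0 < B := by positivity
  have step : ∀ j, gg (N j / μ + k j) - gg (N j / μ) ≤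
      (k j - if N j = q + 1 then k j / (4 * μ) else 0) / B := fun j => by
    rcases hN j with hj | hj
    · have : N j ≠ q + 1 := by rw [hj]; linarith
      rw [if_neg this, hj, sub_zero]
      exact gg_upper _ _ (by positivity) (hk0 j)
    · rw [if_pos hj, hj]
      exact (gg_upper _ _ (by positivity) (hk0 j)).trans (big_part q μ _ hq hμ1 hqμ (hk0 j))
  have hsum : ∑ j, gg (N j / μ + k j) - ∑ j, gg (N j / μ) ≤
      (∑ j, k j - ∑ j, if N j = q + 1 then k j / (4 * μ) else 0) / B := by
    rw [← Finset.sum_sub_distrib, ← Finset.sum_sub_distrib, Finset.sum_div]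
    exact Finset.sum_le_sum fun j _ => step j
  have hks : ∑ j, k j = 2 * t / μ ^ 2 + (1 + 4 * t / μ) * (∑ j, b j) / μ ^ 3 := by
    rw [← hsa, Finset.mul_sum, Finset.sum_div, Finset.sum_div, ← Finset.sum_add_distrib]
  have hbig0 : 0 ≤ ∑ j, if N j = q + 1 then k j / (4 * μ) else 0 :=
    Finset.sum_nonneg fun j _ => by
      have := hk0 j
      split_ifs <;> positivity
  -- main upper bound
  have hmain : ∑ j, k j - (∑ j, if N j = q + 1 then k j / (4 * μ) else 0) ≤
      2 * t / μ ^ 2 + (t * (t + 1) - 1 / 4) / μ ^ 3 + 4 * t ^ 2 * (t + 1) / μ ^ 4 := by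
    rw [hks]
    have hε : 0 ≤ 4 * t / μ := by positivity
    have e0 : (1 + 4 * t / μ) * (t * (t + 1)) / μ ^ 3 =
        t * (t + 1) / μ ^ 3 + 4 * t ^ 2 * (t + 1) / μ ^ 4 := by
      field_simp
    rcases hcase with hc | ⟨j, hj, haj⟩
    · have e1 : (1 + 4 * t / μ) * (∑ j, b j) / μ ^ 3 ≤
          (1 + 4 * t / μ) * (t * (t + 1)) / μ ^ 3 - 1 / μ ^ 3 := by
        rw [← sub_div]
        apply div_le_div_of_nonneg_right _ (by positivity)
        have : (1 + 4 * t / μ) * (∑ j, b j) ≤ (1 + 4 * t / μ) * (t * (t + 1) - 1) :=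
          mul_le_mul_of_nonneg_left hc (by positivity)
        nlinarith
      have e2 : (t * (t + 1) - 1 / 4) / μ ^ 3 = t * (t + 1) / μ ^ 3 - (1 / μ ^ 3) / 4 := by
        ring
      have e3 : 0 < 1 / μ ^ 3 := by positivity
      linarith
    · have e1 : (1 + 4 * t / μ) * (∑ j, b j) / μ ^ 3 ≤
          (1 + 4 * t / μ) * (t * (t + 1)) / μ ^ 3 := by
        apply div_le_div_of_nonneg_right _ (by positivity)
        exact mul_le_mul_of_nonneg_left hsb (by positivity)
      have e2 : (t * (t + 1) - 1 / 4) / μ ^ 3 = t * (t + 1) / μ ^ 3 - 1 / (4 * μ ^ 3) := by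
        field_simp
      have e3 : k j / (4 * μ) ≤ ∑ j, if N j = q + 1 then k j / (4 * μ) else 0 := by
        have := Finset.single_le_sum (f := fun j => if N j = q + 1 then k j / (4 * μ) else 0)
          (fun j _ => by
            have := hk0 j
            split_ifs <;> positivity) (Finset.mem_univ j)
        simpa [hj] using this
      have e4 : 1 / μ ^ 2 ≤ k j := by
        have f1 : 1 / μ ^ 2 ≤ a j / μ ^ 2 := div_le_div_of_nonneg_right haj (by positivity)
        have f2 : 0 ≤ (1 + 4 * t / μ) * b j / μ ^ 3 := by
          have := hb j
          positivity
        rw [← hkj j]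
        linarith
      have e5 : 1 / (4 * μ ^ 3) ≤ k j / (4 * μ) := by
        have : 1 / (4 * μ ^ 3) = (1 / μ ^ 2) / (4 * μ) := by field_simp
        rw [this]
        exact div_le_div_of_nonneg_right e4 (by positivity)
      linarith
  set h0 := 2 * t / μ ^ 2 + t * (t + 1) / μ ^ 3 with hh0
  have h00 : 0 ≤ h0 := by positivity
  set K := 2 * t + t * (t + 1) with hK
  have h0K : h0 ≤ K / μ ^ 2 := by
    have : t * (t + 1) / μ ^ 3 ≤ t * (t + 1) / μ ^ 2 := by
      apply div_le_div_of_nonneg_left (by positivity) (by positivity)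
      exact pow_le_pow_right₀ hμ1 (by norm_num)
    rw [hK, add_div]
    linarith
  have h0sq : h0 ^ 2 ≤ K ^ 2 / μ ^ 4 := by
    have := pow_le_pow_left₀ h00 h0K 2
    calc h0 ^ 2 ≤ (K / μ ^ 2) ^ 2 := this
      _ = K ^ 2 / μ ^ 4 := by rw [div_pow]; ring
  have hlow : (h0 - h0 ^ 2) / B ≤ gg (q / μ + h) - gg (q / μ) := by
    have f1 := gg_lower (q / μ) h0 (by positivity) h00
    have f2 : gg (q / μ + h0) ≤ gg (q / μ + h) := gg_le (by positivity) (by linarith)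
    linarith
  have hfin : 2 * t / μ ^ 2 + (t * (t + 1) - 1 / 4) / μ ^ 3 + 4 * t ^ 2 * (t + 1) / μ ^ 4 <
      h0 - h0 ^ 2 := by
    have g1 : (4 * t ^ 2 * (t + 1) + K ^ 2) / μ ^ 4 < (1 / 4) / μ ^ 3 := by
      rw [div_lt_div_iff₀ (by positivity) (by positivity)]
      have : (0 : ℝ) < μ ^ 3 := by positivity
      nlinarith
    have g2 : (t * (t + 1) - 1 / 4) / μ ^ 3 = t * (t + 1) / μ ^ 3 - (1 / 4) / μ ^ 3 := by
      rw [sub_div]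
    have g3 : (4 * t ^ 2 * (t + 1) + K ^ 2) / μ ^ 4 =
      4 * t ^ 2 * (t + 1) / μ ^ 4 + K ^ 2 / μ ^ 4 := by rw [add_div]
    linarith
  have hlt : (∑ j, k j - ∑ j, if N j = q + 1 then k j / (4 * μ) else 0) / B <
      (h0 - h0 ^ 2) / B := div_lt_div_of_pos_right (hmain.trans_lt hfin) hBpos
  linarith

/-- Excess for the star. -/
noncomputable def hstar (t μ : ℝ) : ℝ := (2 * t * μ + t * (t + 1)) / (μ * (μ ^ 2 - t))
/-- Excess for the triangle. -/
noncomputable def htri (μ : ℝ) : ℝ := 6 / (μ * (μ - 2))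

theorem hstar_ge (t μ : ℝ) (ht : 0 ≤ t) (hμ : 1 ≤ μ) (h : t < μ) :
    2 * t / μ ^ 2 + t * (t + 1) / μ ^ 3 ≤ hstar t μ := by
  have hμ0 : 0 < μ := by linarith
  have h2 : 0 < μ ^ 2 - t := by nlinarith
  have : 2 * t / μ ^ 2 + t * (t + 1) / μ ^ 3 = (2 * t * μ + t * (t + 1)) / (μ * μ ^ 2) := by
    field_simp
  rw [this, hstar]
  apply div_le_div_of_nonneg_left (by positivity) (by positivity)
  nlinarith

theorem htri_gt (μ : ℝ) (hμ : 3 < μ) : hstar 3 μ < htri μ := by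
  unfold hstar htri
  have h2 : 0 < μ ^ 2 - 3 := by nlinarith
  have h3 : 0 < μ - 2 := by linarith
  rw [div_lt_div_iff₀ (by positivity) (by positivity)]
  nlinarith

theorem hstar_nonneg (t μ : ℝ) (ht : 0 ≤ t) (hμ : 1 ≤ μ) (h : t < μ) : 0 ≤ hstar t μ :=
  le_trans (by positivity) (hstar_ge t μ ht hμ h)

/-! ### Stars and triangles -/

theorem Phi_shape {V I : Type*} [Fintype V] [Fintype I] (p : V → I) (y : V → ℝ) (i : I) (μ h : ℝ)
    (hy : ∀ j, psum p y j = psum p (fun _ => 1) j / μ + if j = i then h else 0) :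
    Phi p y = ∑ j, gg (psum p (fun _ => 1) j / μ) +
      (gg (psum p (fun _ => 1) i / μ + h) - gg (psum p (fun _ => 1) i / μ)) := by
  have h1 : Phi p y = ∑ j, gg (psum p y j) := rfl
  have h2 : ∀ j, gg (psum p y j) = gg (psum p (fun _ => 1) j / μ) +
      if j = i then (gg (psum p (fun _ => 1) i / μ + h) - gg (psum p (fun _ => 1) i / μ))
        else 0 := fun j => by
    rw [hy j]
    split_ifs with hj
    · subst hj; ring
    · simp
  rw [h1, Finset.sum_congr rfl fun j _ => h2 j, Finset.sum_add_distrib]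
  simp

theorem star_shape {V I : Type*} [Fintype V] [Fintype I] (p : V → I)
    (H : SimpleGraph V) (m : ℕ)
    (φ : H.induce H.support ≃g completeBipartiteGraph Unit (Fin m)) (i : I)
    (hi : ∀ u v, H.Adj u v → p u = i) (μ : ℝ) (hμ : 1 ≤ μ) (hm : (m : ℝ) < μ) :
    ∃ y : V → ℝ, (∀ v, 0 < y v) ∧ (∀ v, nsum H y v = μ * y v - 1) ∧
      Phi p y = ∑ j, gg (psum p (fun _ => 1) j / μ) +
      (gg (psum p (fun _ => 1) i / μ + hstar m μ) - gg (psum p (fun _ => 1) i / μ)) := by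
  have hμ0 : 0 < μ := by linarith
  have h2 : 0 < μ ^ 2 - m := by nlinarith
  have hm0 : (0 : ℝ) ≤ m := by positivity
  obtain ⟨y, h0, h1, h3⟩ := shape_test p H _ φ i hi μ hμ0
    (Sum.elim (fun _ => (μ + m) / (μ ^ 2 - m)) (fun _ => (μ + 1) / (μ ^ 2 - m)))
    (by rintro (a | a) <;> simp only [Sum.elim_inl, Sum.elim_inr] <;> positivity)
    (by
      rintro (a | a)
      · simp only [nsum, completeBipartiteGraph_adj, Fintype.sum_sum_type]
        simp
        field_simp
        ring
      · simp only [nsum, completeBipartiteGraph_adj, Fintype.sum_sum_type]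
        simp
        field_simp
        ring)
  refine ⟨y, h0, h1, Phi_shape p y i μ _ fun j => ?_⟩
  rw [h3 j]
  congr 2
  simp [hstar]
  field_simp
  ring

theorem tri_shape {V I : Type*} [Fintype V] [Fintype I] (p : V → I)
    (H : SimpleGraph V)
    (φ : H.induce H.support ≃g completeGraph (Fin 3)) (i : I)
    (hi : ∀ u v, H.Adj u v → p u = i) (μ : ℝ) (hμ : 3 < μ) :
    ∃ y : V → ℝ, (∀ v, 0 < y v) ∧ (∀ v, nsum H y v = μ * y v - 1) ∧
      Phi p y = ∑ j, gg (psum p (fun _ => 1) j / μ) +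
      (gg (psum p (fun _ => 1) i / μ + htri μ) - gg (psum p (fun _ => 1) i / μ)) := by
  have hμ0 : 0 < μ := by linarith
  have h2 : 0 < μ - 2 := by linarith
  obtain ⟨y, h0, h1, h3⟩ := shape_test p H _ φ i hi μ hμ0
    (fun _ => 1 / (μ - 2)) (fun _ => by positivity)
    (by
      intro a
      simp only [nsum, completeGraph, SimpleGraph.top_adj, Fin.sum_univ_three]
      fin_cases a <;> simp <;> field_simp <;> ring)
  refine ⟨y, h0, h1, Phi_shape p y i μ _ fun j => ?_⟩
  rw [h3 j]
  congr 2
  simp [htri]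
  field_simp
  ring

theorem dg_eq {V : Type*} [Fintype V] (H : SimpleGraph V) (v : V) : dg H v = H.degree v := by
  unfold dg nsum
  rw [Finset.sum_boole, ← SimpleGraph.card_neighborFinset_eq_degree]
  congr 2
  ext u
  simp

theorem sum_dg {V : Type*} [Fintype V] (H : SimpleGraph V) :
    ∑ v, dg H v = 2 * (H.edgeFinset.card : ℝ) := by
  simp only [dg_eq]
  exact_mod_cast H.sum_degrees_eq_twice_card_edges

theorem card_inc {V : Type*} [Fintype V] (H : SimpleGraph V) (u v : V) (h : H.Adj u v) :
    H.degree u + H.degree v = (H.incidenceFinset u ∪ H.incidenceFinset v).card + 1 := by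
  rw [← SimpleGraph.card_incidenceFinset_eq_degree, ← SimpleGraph.card_incidenceFinset_eq_degree,
    ← Finset.card_union_add_card_inter]
  congr 1
  rw [Finset.card_eq_one]
  refine ⟨s(u, v), ?_⟩
  have := H.incidenceSet_inter_incidenceSet_of_adj h
  ext e
  have h2 := Set.ext_iff.1 this e
  simpa using h2

theorem deg_add_le {V : Type*} [Fintype V] (H : SimpleGraph V) (u v : V) (h : H.Adj u v) :
    H.degree u + H.degree v ≤ H.edgeFinset.card + 1 := by
  rw [card_inc H u v h]
  have : (H.incidenceFinset u ∪ H.incidenceFinset v) ⊆ H.edgeFinset :=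
    Finset.union_subset (H.incidenceFinset_subset u) (H.incidenceFinset_subset v)
  have := Finset.card_le_card this
  omega

theorem deg_add_lt {V : Type*} [Fintype V] (H : SimpleGraph V) (u v : V) (h : H.Adj u v)
    (a b : V) (hab : H.Adj a b) (hau : a ≠ u) (hav : a ≠ v) (hbu : b ≠ u) (hbv : b ≠ v) :
    H.degree u + H.degree v ≤ H.edgeFinset.card := by
  rw [card_inc H u v h]
  have : (H.incidenceFinset u ∪ H.incidenceFinset v) ⊂ H.edgeFinset := by
    refine Finset.ssubset_iff_subset_ne.2 ⟨Finset.union_subset (H.incidenceFinset_subset u)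
      (H.incidenceFinset_subset v), fun heq => ?_⟩
    have h1 : s(a, b) ∈ H.edgeFinset := by simpa using hab
    rw [← heq] at h1
    simp [SimpleGraph.incidenceSet] at h1
    rcases h1 with h1 | h1
    · rcases h1.2 with h1 | h1
      · exact hau h1.symm
      · exact hbu h1.symm
    · rcases h1.2 with h1 | h1
      · exact hav h1.symm
      · exact hbv h1.symm
  have := Finset.card_lt_card this
  omega

theorem sum_dg2 {V : Type*} [Fintype V] (H : SimpleGraph V) :
    2 * ∑ v, dg2 H v + ∑ v, ∑ u, (if H.Adj v u then
      ((H.edgeFinset.card : ℝ) + 1 - (dg H v + dg H u)) else 0) =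
    2 * ((H.edgeFinset.card : ℝ) * (H.edgeFinset.card + 1)) := by
  have h1 : ∑ v, dg2 H v = ∑ v, ∑ u, if H.Adj v u then dg H u else 0 := rfl
  have h2 : ∑ v, dg2 H v = ∑ v, ∑ u, if H.Adj v u then dg H v else 0 := by
    rw [h1, Finset.sum_comm]
    refine Finset.sum_congr rfl fun v _ => Finset.sum_congr rfl fun u _ => ?_
    simp only [H.adj_comm]
  have h3 : ((H.edgeFinset.card : ℝ) + 1) * ∑ v, dg H v =
      ∑ v, ∑ u, if H.Adj v u then ((H.edgeFinset.card : ℝ) + 1) else 0 := by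
    unfold dg nsum
    simp only [Finset.mul_sum, mul_ite, mul_one, mul_zero]
  rw [sum_dg] at h3
  have h4 : ∑ v, ∑ u, (if H.Adj v u then
      ((H.edgeFinset.card : ℝ) + 1 - (dg H v + dg H u)) else 0) =
      (∑ v, ∑ u, if H.Adj v u then ((H.edgeFinset.card : ℝ) + 1) else 0) -
      ((∑ v, ∑ u, if H.Adj v u then dg H v else 0) +
      (∑ v, ∑ u, if H.Adj v u then dg H u else 0)) := by
    simp only [← Finset.sum_add_distrib, ← Finset.sum_sub_distrib]
    refine Finset.sum_congr rfl fun v _ => Finset.sum_congr rfl fun u _ => ?_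
    split_ifs <;> simp
  rw [h4, ← h2, ← h1, ← h3]
  ring

theorem def_nonneg {V : Type*} [Fintype V] (H : SimpleGraph V) (u v : V) :
    0 ≤ (if H.Adj v u then ((H.edgeFinset.card : ℝ) + 1 - (dg H v + dg H u)) else 0) := by
  split_ifs with h
  · have := deg_add_le H v u h
    have h2 : (H.degree v : ℝ) + H.degree u ≤ H.edgeFinset.card + 1 := by exact_mod_cast this
    rw [dg_eq, dg_eq]
    linarith
  · exact le_rfl

theorem sum_dg2_le {V : Type*} [Fintype V] (H : SimpleGraph V) :
    ∑ v, dg2 H v ≤ (H.edgeFinset.card : ℝ) * (H.edgeFinset.card + 1) := by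
  have h := sum_dg2 H
  have h2 : 0 ≤ ∑ v, ∑ u, (if H.Adj v u then
      ((H.edgeFinset.card : ℝ) + 1 - (dg H v + dg H u)) else 0) :=
    Finset.sum_nonneg fun v _ => Finset.sum_nonneg fun u _ => def_nonneg H u v
  linarith

theorem sum_dg2_lt {V : Type*} [Fintype V] (H : SimpleGraph V) (u v : V) (h : H.Adj u v)
    (a b : V) (hab : H.Adj a b) (hau : a ≠ u) (hav : a ≠ v) (hbu : b ≠ u) (hbv : b ≠ v) :
    ∑ v, dg2 H v ≤ (H.edgeFinset.card : ℝ) * (H.edgeFinset.card + 1) - 1 := by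
  have hs := sum_dg2 H
  set F : V → V → ℝ := fun v u => (if H.Adj v u then
      ((H.edgeFinset.card : ℝ) + 1 - (dg H v + dg H u)) else 0) with hF
  have hF0 : ∀ v u, 0 ≤ F v u := fun v u => def_nonneg H u v
  have h1 : (H.degree u : ℝ) + H.degree v ≤ H.edgeFinset.card := by
    exact_mod_cast deg_add_lt H u v h a b hab hau hav hbu hbv
  have e1 : 1 ≤ F u v := by
    simp only [hF, h, if_true, dg_eq]; linarith
  have e2 : 1 ≤ F v u := by
    simp only [hF, h.symm, if_true, dg_eq]; linarith
  have e3 : ∀ w x, F w x ≤ ∑ x, F w x := fun w x =>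
    Finset.single_le_sum (f := fun x => F w x) (fun x _ => hF0 w x) (Finset.mem_univ x)
  have e4 : ∑ x, F u x + ∑ x, F v x ≤ ∑ w, ∑ x, F w x := by
    have := Finset.sum_le_sum_of_subset_of_nonneg (f := fun w => ∑ x, F w x)
      (Finset.subset_univ ({u, v} : Finset V))
      (fun w _ _ => Finset.sum_nonneg fun x _ => hF0 w x)
    rwa [Finset.sum_pair h.ne] at this
  have := e3 u v
  have := e3 v u
  linarith

/-- Pairwise intersecting edges. -/
theorem intersecting {V : Type*} (H : SimpleGraph V)
    (hint : ∀ a b c d, H.Adj a b → H.Adj c d → c = a ∨ c = b ∨ d = a ∨ d = b)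
    (a b : V) (hab : H.Adj a b) :
    (∃ a, ∀ u v, H.Adj u v → u = a ∨ v = a) ∨
    (∃ a b c, H.Adj a b ∧ H.Adj b c ∧ H.Adj a c ∧
      ∀ u v, H.Adj u v → (u = a ∨ u = b ∨ u = c) ∧ (v = a ∨ v = b ∨ v = c)) := by
  by_cases h1 : ∀ u v, H.Adj u v → u = a ∨ v = a
  · exact Or.inl ⟨a, h1⟩
  by_cases h2 : ∀ u v, H.Adj u v → u = b ∨ v = b
  · exact Or.inl ⟨b, h2⟩
  right
  push Not at h1 h2
  obtain ⟨c, hbc, hca⟩ : ∃ c, H.Adj b c ∧ c ≠ a := by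
    obtain ⟨u, v, huv, hu, hv⟩ := h1
    rcases hint a b u v hab huv with h | h | h | h
    · exact absurd h hu
    · exact ⟨v, h ▸ huv, hv⟩
    · exact absurd h hv
    · exact ⟨u, h ▸ huv.symm, hu⟩
  obtain ⟨d, had, hdb⟩ : ∃ d, H.Adj a d ∧ d ≠ b := by
    obtain ⟨u, v, huv, hu, hv⟩ := h2
    rcases hint a b u v hab huv with h | h | h | h
    · exact ⟨v, h ▸ huv, hv⟩
    · exact absurd h hu
    · exact ⟨u, h ▸ huv.symm, hu⟩
    · exact absurd h hv
  have hdc : d = c := by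
    rcases hint b c a d hbc had with h | h | h | h
    · exact absurd h hab.ne
    · exact absurd h.symm hca
    · exact absurd h hdb
    · exact h
  subst hdc
  refine ⟨a, b, d, hab, hbc, had, fun u v huv => ?_⟩
  have k1 := hint a b u v hab huv
  have k2 := hint b d u v hbc huv
  have k3 := hint a d u v had huv
  have n1 := hab.ne
  have n2 := hbc.ne
  have n3 := had.ne
  have n4 := huv.ne
  grind

theorem star_iso {V : Type*} [Fintype V] (H : SimpleGraph V) (a : V)
    (h : ∀ u v, H.Adj u v → u = a ∨ v = a) (t : ℕ) (ht : 1 ≤ t) (hc : H.edgeFinset.card = t) :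
    Nonempty (H.induce H.support ≃g completeBipartiteGraph Unit (Fin t)) := by
  have hdeg : Fintype.card (H.neighborSet a) = t := by
    rw [SimpleGraph.card_neighborSet_eq_degree, ← SimpleGraph.card_incidenceFinset_eq_degree, ← hc]
    congr 1
    ext e
    induction e with
    | _ x y =>
      simp [SimpleGraph.incidenceSet]
      intro hxy
      rcases h x y hxy with h | h
      · exact Or.inl h.symm
      · exact Or.inr h.symm
  let e : Fin t ≃ H.neighborSet a := (Fintype.equivFinOfCardEq hdeg).symm
  have ha : ∀ j, H.Adj a (e j) := fun j => (e j).2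
  have hsup : a ∈ H.support := H.mem_support.2 ⟨_, ha ⟨0, ht⟩⟩
  let f : Unit ⊕ Fin t → H.support :=
    Sum.elim (fun _ => ⟨a, hsup⟩) (fun j => ⟨e j, H.mem_support.2 ⟨_, (ha j).symm⟩⟩)
  have hf : Function.Bijective f := by
    constructor
    · rintro (x | x) (y | y) hxy
      · rfl
      · have : a = e y := congrArg Subtype.val hxy
        exact absurd this (ha y).ne
      · have : (e x : V) = a := congrArg Subtype.val hxy
        exact absurd this.symm (ha x).ne
      · have h5 := congrArg (fun z : H.support => (z : V)) hxy
        have : (e x : V) = e y := h5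
        rw [e.injective (Subtype.ext this)]
    · rintro ⟨v, hv⟩
      obtain ⟨w, hw⟩ := H.mem_support.1 hv
      by_cases hva : v = a
      · exact ⟨Sum.inl (), Subtype.ext hva.symm⟩
      · have : w = a := (h v w hw).resolve_left hva
        subst this
        refine ⟨Sum.inr (e.symm ⟨v, hw.symm⟩), Subtype.ext ?_⟩
        simp [f]
  refine ⟨(RelIso.mk (Equiv.ofBijective f hf) ?_ : completeBipartiteGraph Unit (Fin t) ≃g _).symm⟩
  rintro (x | x) (y | y)
  · simp [f]
  · simp [f, ha y]
  · simp [f, (ha x).symm]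
  · simp [f]
    intro hxy
    rcases h _ _ hxy with h | h
    · exact (ha x).ne h.symm
    · exact (ha y).ne h.symm

theorem tri_iso {V : Type*} [Fintype V] (H : SimpleGraph V) (a b c : V)
    (hab : H.Adj a b) (hbc : H.Adj b c) (hac : H.Adj a c)
    (h : ∀ u v, H.Adj u v → (u = a ∨ u = b ∨ u = c) ∧ (v = a ∨ v = b ∨ v = c)) :
    H.edgeFinset.card = 3 ∧ Nonempty (H.induce H.support ≃g completeGraph (Fin 3)) := by
  have n1 := hab.ne
  have n2 := hbc.ne
  have n3 := hac.ne
  constructor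
  · rw [Finset.card_eq_three]
    refine ⟨s(a, b), s(b, c), s(a, c), ?_, ?_, ?_, ?_⟩
    · simp [n1, n2, n3]
    · simp [n1, n2, n3]
    · simp [n1, n2, n3, n1.symm]
    · ext e
      induction e with
      | _ x y =>
        simp only [SimpleGraph.mem_edgeFinset, SimpleGraph.mem_edgeSet, Finset.mem_insert,
          Finset.mem_singleton, Sym2.eq_iff]
        constructor
        · intro hxy
          have := h x y hxy
          have := hxy.ne
          grind
        · have := hab.symm
          have := hbc.symm
          have := hac.symm
          grind
  · let f : Fin 3 → H.support :=
      ![⟨a, H.mem_support.2 ⟨_, hab⟩⟩, ⟨b, H.mem_support.2 ⟨_, hbc⟩⟩, ⟨c, H.mem_support.2 ⟨_, hac.symm⟩⟩]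
    have hf : Function.Bijective f := by
      constructor
      · intro x y hxy
        fin_cases x <;> fin_cases y <;> simp_all [f]
      · rintro ⟨v, hv⟩
        obtain ⟨w, hw⟩ := H.mem_support.1 hv
        rcases (h v w hw).1 with rfl | rfl | rfl
        · exact ⟨0, rfl⟩
        · exact ⟨1, rfl⟩
        · exact ⟨2, rfl⟩
    refine ⟨(RelIso.mk (Equiv.ofBijective f hf) ?_ : completeGraph (Fin 3) ≃g _).symm⟩
    intro x y
    have := hab.symm
    have := hbc.symm
    have := hac.symm
    fin_cases x <;> fin_cases y <;> simp_all [f, completeGraph]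

/-! ### The Turán family -/

theorem le_psum {V I : Type*} [Fintype V] (p : V → I) (y : V → ℝ) (hy : ∀ v, 0 ≤ y v)
    (u : V) : y u ≤ psum p y (p u) := by
  have := Finset.single_le_sum (f := fun w => if p w = p u then y w else 0)
    (fun w _ => by split_ifs <;> simp [hy]) (Finset.mem_univ u)
  simpa [psum] using this

/-- The part of a vertex. -/
def prt (n r : ℕ) (hr : 0 < r) (v : Fin n) : Fin r := ⟨(v : ℕ) % r, Nat.mod_lt _ hr⟩

theorem partSize_eq (n r : ℕ) (hr : 0 < r) (i : Fin r) :
    partSize n r i = n / r + if (i : ℕ) < n % r then 1 else 0 := by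
  have h := Nat.count_modEq_card n hr i
  rw [Nat.mod_eq_of_lt i.2] at h
  rw [← h, Nat.count_eq_card_filter_range, partSize]
  refine Finset.card_nbij (fun v : Fin n => (v : ℕ)) ?_ ?_ ?_
  · intro v hv
    simp only [Finset.coe_filter, Finset.mem_filter, Finset.mem_univ, true_and, Finset.mem_range,
      Set.mem_ofPred_eq] at hv ⊢
    exact ⟨v.2, by rw [Nat.ModEq, hv, Nat.mod_eq_of_lt i.2]⟩
  · intro a _ b _ hab
    exact Fin.ext hab
  · intro m hm
    simp only [Finset.coe_filter, Finset.mem_range, Set.mem_ofPred_eq] at hm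
    refine ⟨⟨m, hm.1⟩, ?_, rfl⟩
    have := hm.2
    rw [Nat.ModEq, Nat.mod_eq_of_lt i.2] at this
    simpa using this

theorem psum_one (n r : ℕ) (hr : 0 < r) (i : Fin r) :
    psum (prt n r hr) (fun _ => 1) i = partSize n r i := by
  unfold psum partSize
  simp only []
  rw [Finset.sum_boole]
  congr 2
  ext v
  simp [prt, Fin.ext_iff]

theorem fam_facts (n r t : ℕ) (hr : 0 < r) (G : SimpleGraph (Fin n)) (hG : G ∈ TuranFam n r t) :
    (∀ u v, (emb n r G).Adj u v → prt n r hr u = prt n r hr v) ∧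
    (∀ u v, G.Adj u v ↔ prt n r hr u ≠ prt n r hr v ∨ (emb n r G).Adj u v) ∧
    (emb n r G).edgeFinset.card = t := by
  obtain ⟨h1, h2, h3⟩ := hG
  refine ⟨fun u v h => Fin.ext (h2 u v h), fun u v => ?_, by convert h3⟩
  have ht : (turanGraph n r).Adj u v ↔ prt n r hr u ≠ prt n r hr v := by
    simp [turanGraph, prt]
  rw [← ht]
  constructor
  · intro h
    by_cases h' : (turanGraph n r).Adj u v
    · exact Or.inl h'
    · exact Or.inr (by simp [emb, h, h'])
  · rintro (h | h)
    · exact h1 h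
    · simp only [emb, SimpleGraph.sdiff_adj] at h
      exact h.1

theorem spec_large (n r t : ℕ) (hr : 2 ≤ r) (hn : 4 ≤ n) (G : SimpleGraph (Fin n))
    (hG : G ∈ TuranFam n r t) : (n : ℝ) / 4 ≤ spectralRad G := by
  have hr0 : 0 < r := by omega
  obtain ⟨-, h2, -⟩ := fam_facts n r t hr0 G hG
  have : Nonempty (Fin n) := ⟨⟨0, by omega⟩⟩
  refine le_spec G (fun _ => 1) (fun _ => one_pos) _ fun v => ?_
  have e1 : (n : ℝ) - psum (prt n r hr0) (fun _ => 1) (prt n r hr0 v) ≤ nsum G (fun _ => 1) v := by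
    have : (n : ℝ) = ∑ u : Fin n, (1 : ℝ) := by simp
    rw [this, psum, ← Finset.sum_sub_distrib, nsum]
    refine Finset.sum_le_sum fun u _ => ?_
    by_cases h : prt n r hr0 u = prt n r hr0 v
    · simp only [h, if_true, sub_self]
      split_ifs <;> simp
    · have : G.Adj v u := (h2 v u).2 (Or.inl fun h' => h h'.symm)
      simp [h, this]
  rw [psum_one, partSize_eq n r hr0] at e1
  have e2 : n / r ≤ n / 2 := Nat.div_le_div_left hr (by norm_num)
  have e3 : 4 * (n / r + if ((prt n r hr0 v : Fin r) : ℕ) < n % r then 1 else 0) ≤ 3 * n := by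
    split_ifs <;> omega
  have e4 : (4 : ℝ) * ((n / r + if ((prt n r hr0 v : Fin r) : ℕ) < n % r then 1 else 0 : ℕ) : ℝ)
    ≤ 3 * n := by exact_mod_cast e3
  linarith

/-- The extremal shape. -/
def Good (n r t : ℕ) (G : SimpleGraph (Fin n)) : Prop :=
  (∃ i : Fin r, partSize n r i = n / r ∧ inPart n r i G) ∧
        (t = 3 →
          Nonempty ((emb n r G).induce (emb n r G).support ≃g completeGraph (Fin 3))) ∧
        (t ≠ 3 →
          Nonempty ((emb n r G).induce (emb n r G).support ≃g
            completeBipartiteGraph Unit (Fin t)))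

/-- Excess for the extremal shape. -/
noncomputable def hgood (t : ℕ) (μ : ℝ) : ℝ := if t = 3 then htri μ else hstar t μ

theorem hgood_ge (t : ℕ) (μ : ℝ) (hμ : 3 < μ) (h : (t : ℝ) < μ) :
    2 * t / μ ^ 2 + t * (t + 1) / μ ^ 3 ≤ hgood t μ := by
  unfold hgood
  have := hstar_ge t μ (by positivity) (by linarith) h
  split_ifs with ht
  · have h2 := htri_gt μ hμ
    subst ht
    push_cast at this ⊢
    linarith
  · exact this

theorem good_test (n r t : ℕ) (hr : 0 < r) (G : SimpleGraph (Fin n)) (hg : Good n r t G)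
    (μ : ℝ) (hμ : 3 < μ) (h : (t : ℝ) < μ) :
    ∃ y : Fin n → ℝ, (∀ v, 0 < y v) ∧ (∀ v, nsum (emb n r G) y v = μ * y v - 1) ∧
      Phi (prt n r hr) y = ∑ j, gg (psum (prt n r hr) (fun _ => 1) j / μ) +
      (gg (((n / r : ℕ) : ℝ) / μ + hgood t μ) - gg (((n / r : ℕ) : ℝ) / μ)) := by
  obtain ⟨⟨i, hi, hp⟩, h3, hn3⟩ := hg
  have hp' : ∀ u v, (emb n r G).Adj u v → prt n r hr u = i := fun u v h => Fin.ext (hp u v h)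
  by_cases ht : t = 3
  · obtain ⟨φ⟩ := h3 ht
    obtain ⟨y, h1, h2, h4⟩ := tri_shape (prt n r hr) _ φ i hp' μ hμ
    refine ⟨y, h1, h2, ?_⟩
    rw [psum_one n r hr i, hi] at h4
    simpa [hgood, ht] using h4
  · obtain ⟨φ⟩ := hn3 ht
    obtain ⟨y, h1, h2, h4⟩ := star_shape (prt n r hr) _ t φ i hp' μ (by linarith) h
    refine ⟨y, h1, h2, ?_⟩
    rw [psum_one n r hr i, hi] at h4
    simpa [hgood, ht] using h4

theorem bad_test (n r t : ℕ) (hr : 0 < r) (ht : 1 ≤ t) (G : SimpleGraph (Fin n))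
    (hG : G ∈ TuranFam n r t) (hb : ¬ Good n r t G)
    (μ : ℝ) (hμ : 4 * (4 * (t : ℝ) ^ 2 * (t + 1) + (2 * t + t * (t + 1)) ^ 2) < μ)
    (hq : ((n / r : ℕ) : ℝ) ≤ 2 * μ) :
    ∃ y : Fin n → ℝ, (∀ v, 0 < y v) ∧ (∀ v, nsum (emb n r G) y v ≤ μ * y v - 1) ∧
      Phi (prt n r hr) y < ∑ j, gg (psum (prt n r hr) (fun _ => 1) j / μ) +
      (gg (((n / r : ℕ) : ℝ) / μ + hgood t μ) - gg (((n / r : ℕ) : ℝ) / μ)) := by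
  obtain ⟨hH, hA, hc⟩ := fam_facts n r t hr G hG
  have ht1 : (1 : ℝ) ≤ t := by exact_mod_cast ht
  have hμ4 : 4 * (t : ℝ) ≤ μ := by nlinarith
  have hμ3 : 3 < μ := by nlinarith
  have hμ0 : 0 < μ := by linarith
  have htμ : (t : ℝ) < μ := by linarith
  set H := emb n r G with hHdef
  by_cases hcase : (∑ v, dg2 H v ≤ (t : ℝ) * (t + 1) - 1) ∨
      ∃ u v, H.Adj u v ∧ partSize n r (prt n r hr u) ≠ n / r
  · obtain ⟨y, h1, h2, h3⟩ := upper_test (prt n r hr) H t (by linarith)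
      (by rw [sum_dg, hc]) μ hμ0 hμ4
    refine ⟨y, h1, h2, ?_⟩
    have e1 : Phi (prt n r hr) y = ∑ j, gg (psum (prt n r hr) y j) := rfl
    rw [e1]
    simp only [h3]
    have hsz : ∀ j, psum (prt n r hr) (fun _ => 1) j = ((n / r : ℕ) : ℝ) ∨
        psum (prt n r hr) (fun _ => 1) j = ((n / r : ℕ) : ℝ) + 1 := fun j => by
      rw [psum_one, partSize_eq n r hr j]
      split_ifs
      · right; push_cast; ring
      · left; simp
    apply phi_compare _ _ _ _ μ t _ (by positivity) hq ht1 hμ hsz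
      (psum_nonneg _ _ (dg_nonneg H)) (psum_nonneg _ _ (dg2_nonneg H))
    · rw [sum_psum, sum_dg, hc]
    · rw [sum_psum, ← hc]; exact sum_dg2_le H
    · rcases hcase with h | ⟨u, v, huv, hs⟩
      · left; rw [sum_psum]; exact h
      · right
        refine ⟨prt n r hr u, ?_, ?_⟩
        · refine (hsz _).resolve_left fun h => hs ?_
          rw [psum_one] at h
          exact_mod_cast h
        · refine (one_le_dg H u v huv).trans ?_
          exact le_psum _ _ (dg_nonneg H) u
    · exact hgood_ge t μ hμ3 htμ
  · push Not at hcase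
    obtain ⟨hW, hsmall⟩ := hcase
    have hint : ∀ a b c d, H.Adj a b → H.Adj c d → c = a ∨ c = b ∨ d = a ∨ d = b := by
      intro a b c d hab hcd
      by_contra hcon
      push Not at hcon
      have := sum_dg2_lt H a b hab c d hcd hcon.1 hcon.2.1 hcon.2.2.1 hcon.2.2.2
      rw [hc] at this
      linarith
    obtain ⟨a, b, hab⟩ : ∃ a b, H.Adj a b := by
      by_contra hcon
      push Not at hcon
      have : H.edgeFinset = ∅ := by
        ext e
        induction e with
        | _ x y => simp [hcon]
      rw [this] at hc
      simp at hc
      omega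
    have hpart : ∀ u v, H.Adj u v → prt n r hr u = prt n r hr a := fun u v huv => by
      rcases hint a b u v hab huv with h | h | h | h
      · rw [h]
      · rw [h, hH a b hab]
      · rw [hH u v huv, h]
      · rw [hH u v huv, h, hH a b hab]
    have hsz := hsmall a b hab
    have hpart' : inPart n r (prt n r hr a) G := fun u v huv =>
      congrArg Fin.val (hpart u v huv)
    rcases intersecting H hint a b hab with ⟨c, hstar'⟩ | ⟨x, y, z, hxy, hyz, hxz, htri'⟩
    · obtain ⟨φ⟩ := star_iso H c hstar' t ht hc
      have ht3 : t = 3 := by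
        by_contra hne
        exact hb ⟨⟨_, hsz, hpart'⟩, fun h => absurd h hne, fun _ => ⟨φ⟩⟩
      obtain ⟨y, h1, h2, h3⟩ := star_shape (prt n r hr) H t φ _ hpart μ (by linarith) htμ
      refine ⟨y, h1, fun v => (h2 v).le, ?_⟩
      rw [h3, psum_one, hsz]
      have k1 : hstar t μ < hgood t μ := by
        subst ht3
        have := htri_gt μ hμ3
        simpa [hgood] using this
      have k2 := hstar_nonneg t μ (by positivity) (by linarith) htμ
      have k3 : gg (((n / r : ℕ) : ℝ) / μ + hstar t μ) < gg (((n / r : ℕ) : ℝ) / μ + hgood t μ) :=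
        gg_lt (by positivity) (by linarith)
      linarith
    · obtain ⟨h3, φ⟩ := tri_iso H x y z hxy hyz hxz htri'
      exact absurd ⟨⟨_, hsz, hpart'⟩, fun _ => φ, fun h => absurd (hc.symm.trans h3) h⟩ hb

theorem main_compare (n r t : ℕ) (hr : 2 ≤ r) (ht : 1 ≤ t) (hn : 4 ≤ n)
    (hbig : 4 * (4 * (t : ℝ) ^ 2 * (t + 1) + (2 * t + t * (t + 1)) ^ 2) < n / 4)
    (G G' : SimpleGraph (Fin n)) (hG : G ∈ TuranFam n r t) (hG' : G' ∈ TuranFam n r t)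
    (hg : Good n r t G) :
    spectralRad G' ≤ spectralRad G ∧ (¬ Good n r t G' → spectralRad G' < spectralRad G) := by
  have hr0 : 0 < r := by omega
  have : Nonempty (Fin n) := ⟨⟨0, by omega⟩⟩
  have ht1 : (1 : ℝ) ≤ t := by exact_mod_cast ht
  obtain ⟨hH, hA, -⟩ := fam_facts n r t hr0 G hG
  obtain ⟨hH', hA', -⟩ := fam_facts n r t hr0 G' hG'
  have hl := spec_large n r t hr hn G' hG'
  set μ := spectralRad G' with hμdef
  have hμ := hbig.trans_le hl
  have hμ3 : 3 < μ := by nlinarith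
  have htμ : (t : ℝ) < μ := by nlinarith
  have hq : ((n / r : ℕ) : ℝ) ≤ 2 * μ := by
    have e1 : n / r ≤ n / 2 := Nat.div_le_div_left hr (by norm_num)
    have e2 : 2 * (n / r) ≤ n := by omega
    have e3 : 2 * ((n / r : ℕ) : ℝ) ≤ n := by exact_mod_cast e2
    linarith
  obtain ⟨y, y0, y1, y2⟩ := good_test n r t hr0 G hg μ hμ3 htμ
  by_cases hg' : Good n r t G'
  · obtain ⟨y', y0', y1', y2'⟩ := good_test n r t hr0 G' hg' μ hμ3 htμ
    have hP := Phi_ge_one _ G' _ hH' hA' y' y0' (fun v => (y1' v).le)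
    rw [y2', ← y2] at hP
    exact ⟨(spec_ge _ G _ hH hA y y0 μ (fun v => (y1 v).ge) hP).1, fun h => absurd hg' h⟩
  · obtain ⟨y', y0', y1', y2'⟩ := bad_test n r t hr0 ht G' hG' hg' μ hμ hq
    have hP := Phi_ge_one _ G' _ hH' hA' y' y0' y1'
    rw [← y2] at y2'
    have hP2 := hP.trans_lt y2'
    have := (spec_ge _ G _ hH hA y y0 μ (fun v => (y1 v).ge) hP2.le).2 hP2
    exact ⟨this.le, fun _ => this⟩

theorem exists_embedded {W : Type*} [Fintype W] (Γ : SimpleGraph W) (hiso : ∀ a, ∃ b, Γ.Adj a b)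
    (n r t : ℕ) (hr : 0 < r) (hW : Fintype.card W ≤ n / r) (hc : Γ.edgeFinset.card = t) :
    ∃ G ∈ TuranFam n r t, (∃ i : Fin r, partSize n r i = n / r ∧ inPart n r i G) ∧
      Nonempty ((emb n r G).induce (emb n r G).support ≃g Γ) := by
  have hlt : ∀ j : Fin (Fintype.card W), r - 1 + r * (j : ℕ) < n := fun j => by
    have h1 : (j : ℕ) + 1 ≤ n / r := by have := j.2; omega
    have h2 : r * ((j : ℕ) + 1) ≤ r * (n / r) := Nat.mul_le_mul_left r h1
    have h3 := Nat.mul_div_le n r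
    rw [mul_add] at h2
    omega
  let e := Fintype.equivFin W
  let em : W ↪ Fin n := ⟨fun w => ⟨r - 1 + r * (e w : ℕ), hlt (e w)⟩, fun a b h => by
    simp only [Fin.mk.injEq] at h
    have h1 : r * (e a : ℕ) = r * (e b : ℕ) := by omega
    exact e.injective (Fin.ext (Nat.eq_of_mul_eq_mul_left hr h1))⟩
  have hmod : ∀ w, ((em w : Fin n) : ℕ) % r = r - 1 := fun w => by
    change (r - 1 + r * (e w : ℕ)) % r = r - 1
    rw [Nat.add_mul_mod_self_left, Nat.mod_eq_of_lt (by omega)]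
  set H := Γ.map em with hH
  have hHadj : ∀ u v, H.Adj u v → (u : ℕ) % r = r - 1 ∧ (v : ℕ) % r = r - 1 := fun u v h => by
    obtain ⟨a, b, -, rfl, rfl⟩ := (SimpleGraph.map_adj em Γ u v).1 h
    exact ⟨hmod a, hmod b⟩
  have hemb : emb n r (turanGraph n r ⊔ H) = H := by
    ext u v
    simp only [emb, SimpleGraph.sdiff_adj, SimpleGraph.sup_adj, turanGraph]
    constructor
    · rintro ⟨h | h, h'⟩
      · exact absurd h h'
      · exact h
    · intro h
      refine ⟨Or.inr h, ?_⟩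
      have := hHadj u v h
      rw [this.1, this.2]
      simp
  refine ⟨turanGraph n r ⊔ H, ⟨le_sup_left, ?_, ?_⟩, ⟨⟨r - 1, by omega⟩, ?_, ?_⟩, ?_⟩
  · rw [hemb]
    intro u v h
    rw [(hHadj u v h).1, (hHadj u v h).2]
  · rw [← hc, ← SimpleGraph.card_edgeFinset_map em Γ]
    have : (emb n r (turanGraph n r ⊔ H)).edgeSet = (Γ.map em).edgeSet := by rw [hemb]
    unfold SimpleGraph.edgeFinset
    congr 1
    ext x
    simp only [Set.mem_toFinset, this]
  · rw [partSize_eq n r hr]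
    have : n % r < r := Nat.mod_lt _ hr
    simp
    omega
  · intro u v h
    rw [hemb] at h
    exact (hHadj u v h).1
  · rw [hemb]
    have hadj : ∀ a b, H.Adj (em a) (em b) ↔ Γ.Adj a b := fun a b =>
      SimpleGraph.map_adj_apply
    let f : W → H.support := fun w => ⟨em w, by
      obtain ⟨b, hb⟩ := hiso w
      exact H.mem_support.2 ⟨em b, (hadj w b).2 hb⟩⟩
    have hf : Function.Bijective f := by
      constructor
      · intro a b h
        exact em.injective (congrArg (fun z : H.support => (z : Fin n)) h)
      · rintro ⟨v, hv⟩
        obtain ⟨w, hw⟩ := H.mem_support.1 hv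
        obtain ⟨a, b, -, rfl, rfl⟩ := (SimpleGraph.map_adj em Γ v w).1 hw
        exact ⟨a, rfl⟩
    exact ⟨(RelIso.mk (Equiv.ofBijective f hf) (fun {a b} => hadj a b) : Γ ≃g _).symm⟩

theorem exists_good (n r t : ℕ) (hr : 0 < r) (ht : 1 ≤ t) (hn : t + 1 ≤ n / r) :
    ∃ G ∈ TuranFam n r t, Good n r t G := by
  by_cases h3 : t = 3
  · obtain ⟨G, hG, h1, h2⟩ := exists_embedded (completeGraph (Fin 3))
      (fun a => ⟨a + 1, by fin_cases a <;> simp [completeGraph]⟩) n r t hr (by simp; omega) (by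
        have h := SimpleGraph.card_edgeFinset_top_eq_card_choose_two (V := Fin 3)
        rw [h3]
        convert h
        simp)
    exact ⟨G, hG, h1, fun _ => h2, fun h => absurd h3 h⟩
  · obtain ⟨G, hG, h1, h2⟩ := exists_embedded (completeBipartiteGraph Unit (Fin t))
      (by
        rintro (a | a)
        · exact ⟨Sum.inr ⟨0, ht⟩, by simp⟩
        · exact ⟨Sum.inl (), by simp⟩) n r t hr (by simp; omega) (by
        have h := sum_dg (completeBipartiteGraph Unit (Fin t))
        have h5 : ∑ v, dg (completeBipartiteGraph Unit (Fin t)) v = 2 * t := by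
          simp only [dg, nsum, completeBipartiteGraph_adj, Fintype.sum_sum_type]
          simp
          ring
        rw [h5] at h
        have h' : ((completeBipartiteGraph Unit (Fin t)).edgeFinset.card : ℝ) = t := by linarith
        exact_mod_cast h')
    exact ⟨G, hG, h1, fun h => absurd h h3, fun _ => h2⟩

/-- (Corollary 1.7.) For `k ≥ 2`, `r ≥ 2` and sufficiently large `n`:
a graph `G ∈ 𝒯_{n,r,k-1}` has maximum spectral radius in `𝒯_{n,r,k-1}` iff all its `k-1`
embedded edges lie inside one part of size `⌊n/r⌋` and the subgraph induced by these edges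
(i.e. the restriction of `H^G` to its support) is `K₃` when `k = 4` and `K_{1,k-1}`
otherwise. -/
theorem stmt_14 (k r : ℕ) (hk : 2 ≤ k) (hr : 2 ≤ r) :
    ∃ N : ℕ, ∀ n : ℕ, N ≤ n → ∀ G ∈ TuranFam n r (k - 1),
      (G ∈ SPEXset (TuranFam n r (k - 1)) ↔
        (∃ i : Fin r, partSize n r i = n / r ∧ inPart n r i G) ∧
        (k = 4 →
          Nonempty ((emb n r G).induce (emb n r G).support ≃g completeGraph (Fin 3))) ∧
        (k ≠ 4 →
          Nonempty ((emb n r G).induce (emb n r G).support ≃g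
            completeBipartiteGraph Unit (Fin (k - 1))))) := by
  obtain ⟨t, rfl⟩ : ∃ t, k = t + 1 := ⟨k - 1, by omega⟩
  have ht : 1 ≤ t := by omega
  have e1 : t + 1 - 1 = t := by omega
  have e2 : t + 1 = 4 ↔ t = 3 := by omega
  simp only [e1, e2, ne_eq]
  refine ⟨4 + r * (t + 1) + (16 * (4 * t ^ 2 * (t + 1) + (2 * t + t * (t + 1)) ^ 2) + 1),
    fun n hn G hG => ?_⟩
  have hr0 : 0 < r := by omega
  have hn4 : 4 ≤ n := by omega
  have hnr : t + 1 ≤ n / r := by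
    rw [Nat.le_div_iff_mul_le hr0, mul_comm]
    omega
  have hbig : 4 * (4 * (t : ℝ) ^ 2 * (t + 1) + (2 * t + t * (t + 1)) ^ 2) < n / 4 := by
    have h1 : 16 * (4 * t ^ 2 * (t + 1) + (2 * t + t * (t + 1)) ^ 2) + 1 ≤ n := by omega
    have h2 : ((16 * (4 * t ^ 2 * (t + 1) + (2 * t + t * (t + 1)) ^ 2) + 1 : ℕ) : ℝ) ≤ n := by
      exact_mod_cast h1
    push_cast at h2
    linarith
  change _ ↔ Good n r t G
  constructor
  · intro hmax
    by_contra hbad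
    obtain ⟨G0, hG0, hg0⟩ := exists_good n r t hr0 ht hnr
    have h1 := (main_compare n r t hr ht hn4 hbig G0 G hG0 hG hg0).2 hbad
    have h2 := hmax.2 G0 hG0
    linarith
  · intro hg
    exact ⟨hG, fun G' hG' => (main_compare n r t hr ht hn4 hbig G G' hG hG' hg).1⟩
end

section
/- For an integer $r \ge 2$, let $K_{n_1, n_2, \ldots, n_r}$ be the complete $r$-partite graph of order $n$ with parts $V_1, V_2, \ldots, V_r$, where $n_i = |V_i| \ge 1$. For each $1 \le i \le r$, let $H_i$ be a graph with vertex set $V(H_i) \subseteq V_i$ and maximum degree at most $\Delta$. Let $G$ be the graph obtained from $K_{n_1, \ldots, n_r}$ by adding the edges of $H_i$ inside $V_i$ for all $i$, let $\rho = \rho(G) > \Delta$, and let $\mathbf{x} = (x_v)_{v \in V(G)}$ be the Perron vector of $G$ normalized so that $\sum_{v \in V(G)} x_v = 1$. Then for each $1 \le s \le r$, $\sum_{u \in V_s} x_u = 1 - \frac{1}{1 + \frac{n_s}{\rho} + \sum_{i=1}^{\infty} \frac{W^{i}(H_s)}{\rho^{i+1}}}$. -/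
open Finset Matrix SimpleGraph
open scoped Classical

lemma walkCount_le {V : Type*} [Fintype V] (H : SimpleGraph V) (Δ : ℕ)
    (hΔ : ∀ u, H.degree u ≤ Δ) (l : ℕ) : ∀ u, walkCount H l u ≤ Δ ^ l := by
  induction l with
  | zero => intro u; simp [walkCount]
  | succ l ih =>
    intro u
    simp only [walkCount]
    calc ∑ v ∈ Finset.univ.filter (fun v => H.Adj u v), walkCount H l v
        ≤ ∑ v ∈ Finset.univ.filter (fun v => H.Adj u v), Δ ^ l :=
          Finset.sum_le_sum fun v _ => ih v
      _ = H.degree u * Δ ^ l := by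
          rw [Finset.sum_const, smul_eq_mul, ← SimpleGraph.card_neighborFinset_eq_degree,
            SimpleGraph.neighborFinset_eq_filter]
      _ ≤ Δ * Δ ^ l := Nat.mul_le_mul_right _ (hΔ u)
      _ = Δ ^ (l + 1) := by ring

/-- In the setting of Theorem 1.3 (complete `r`-partite graph with graphs
`H_s` of maximum degree at most `Δ` embedded into the parts), if `ρ = ρ(G) > Δ` and `x` is
the Perron vector of `G` with `∑_v x_v = 1`, then for every part `s`,
`∑_{u ∈ V_s} x_u = 1 - 1/(1 + n_s/ρ + ∑_{i≥1} W^i(H_s)/ρ^{i+1})`. -/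
theorem stmt_16 {V : Type*} [Fintype V] (r : ℕ) (hr : 2 ≤ r) (p : V → Fin r)
    (hparts : ∀ i : Fin r, 1 ≤ (Finset.univ.filter (fun v => p v = i)).card)
    (Δ : ℕ) (H : SimpleGraph V)
    (hHin : ∀ u v, H.Adj u v → p u = p v)
    (hΔ : ∀ u, H.degree u ≤ Δ)
    (G : SimpleGraph V)
    (hG : ∀ u v, G.Adj u v ↔ (p u ≠ p v ∨ H.Adj u v))
    (hρ : spectralRad G > Δ)
    (x : V → ℝ) (hx : ∀ v, 0 ≤ x v) (hx0 : x ≠ 0)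
    (heig : G.adjMatrix ℝ *ᵥ x = spectralRad G • x)
    (hnorm : ∑ v, x v = 1) :
    ∀ s : Fin r,
      ∑ u ∈ Finset.univ.filter (fun v => p v = s), x u
        = 1 - (1 + ((Finset.univ.filter (fun v => p v = s)).card : ℝ) / spectralRad G +
            ∑' i : ℕ,
              (∑ u ∈ Finset.univ.filter (fun v => p v = s), (walkCount H (i + 1) u : ℝ)) /
                spectralRad G ^ (i + 2))⁻¹ := by
  intro s
  set ρ := spectralRad G with hρdef
  set P := Finset.univ.filter (fun v => p v = s) with hP
  set S := ∑ u ∈ P, x u with hS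
  have hρ0 : 0 < ρ := lt_of_le_of_lt (Nat.cast_nonneg Δ) hρ
  have hmemP : ∀ v, v ∈ P ↔ p v = s := by intro v; simp [hP]
  have heq : ∀ u ∈ P, ρ * x u = (1 - S) + ∑ v ∈ P, if H.Adj u v then x v else 0 := by
    intro u hu
    have h1 := congrFun heig u
    rw [SimpleGraph.adjMatrix_mulVec_apply, SimpleGraph.neighborFinset_eq_filter,
      Finset.sum_filter, Pi.smul_apply, smul_eq_mul] at h1
    rw [← h1, ← hnorm, hS, hP, Finset.sum_filter, Finset.sum_filter, ← Finset.sum_sub_distrib,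
      ← Finset.sum_add_distrib]
    refine Finset.sum_congr rfl fun v _ => ?_
    have hu' := (hmemP u).1 hu
    have ha := hG u v
    have hb := hHin u v
    by_cases hv : p v = s
    · have : G.Adj u v ↔ H.Adj u v := by
        rw [ha, hu', hv]; simp
      simp [hv, this]
    · have h2 : G.Adj u v := ha.2 (Or.inl (by rw [hu']; exact fun h => hv h.symm))
      simp [hv, h2]
  have hwalk : ∀ l, ∀ v ∈ P, (walkCount H (l + 1) v : ℝ) =
      ∑ u ∈ P, if H.Adj u v then (walkCount H l u : ℝ) else 0 := by
    intro l v hv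
    simp only [walkCount]
    push_cast
    rw [hP, Finset.sum_filter, Finset.sum_filter]
    refine Finset.sum_congr rfl fun u _ => ?_
    have hv' := (hmemP v).1 hv
    have hb := hHin u v
    by_cases h : H.Adj u v
    · simp [h, h.symm, hb h, hv']
    · have h' : ¬ H.Adj v u := fun h2 => h h2.symm
      simp [h, h']
  let W : ℕ → ℝ := fun l => ∑ u ∈ P, (walkCount H l u : ℝ)
  let y : ℕ → ℝ := fun l => ∑ u ∈ P, (walkCount H l u : ℝ) * x u
  have hrec : ∀ l, ρ * y l = (1 - S) * W l + y (l + 1) := by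
    intro l
    have e1 : y (l + 1) = ∑ u ∈ P, (walkCount H l u : ℝ) *
        ∑ v ∈ P, if H.Adj u v then x v else 0 := by
      calc y (l + 1) = ∑ v ∈ P, ∑ u ∈ P,
            (if H.Adj u v then (walkCount H l u : ℝ) else 0) * x v := by
            refine Finset.sum_congr rfl fun v hv => ?_
            rw [hwalk l v hv, Finset.sum_mul]
        _ = _ := by
            rw [Finset.sum_comm]
            refine Finset.sum_congr rfl fun u _ => ?_
            rw [Finset.mul_sum]
            refine Finset.sum_congr rfl fun v _ => ?_
            split_ifs <;> simp
    rw [e1]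
    simp only [y, W]
    rw [Finset.mul_sum, Finset.mul_sum, ← Finset.sum_add_distrib]
    refine Finset.sum_congr rfl fun u hu => ?_
    have := heq u hu
    linear_combination (walkCount H l u : ℝ) * this
  have hwle : ∀ l u, (walkCount H l u : ℝ) ≤ (Δ : ℝ) ^ l := by
    intro l u
    exact_mod_cast walkCount_le H Δ hΔ l u
  have hq0 : 0 ≤ (Δ : ℝ) / ρ := by positivity
  have hq1 : (Δ : ℝ) / ρ < 1 := (div_lt_one hρ0).2 hρ
  have hWnn : ∀ l, 0 ≤ W l := fun l => Finset.sum_nonneg fun u _ => Nat.cast_nonneg _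
  have hynn : ∀ l, 0 ≤ y l := fun l =>
    Finset.sum_nonneg fun u _ => mul_nonneg (Nat.cast_nonneg _) (hx u)
  have hWle : ∀ l, W l ≤ (P.card : ℝ) * (Δ : ℝ) ^ l := by
    intro l
    calc W l ≤ ∑ u ∈ P, (Δ : ℝ) ^ l := Finset.sum_le_sum fun u _ => hwle l u
      _ = _ := by simp
  have hyle : ∀ l, y l ≤ (Δ : ℝ) ^ l * S := by
    intro l
    rw [hS, Finset.mul_sum]
    exact Finset.sum_le_sum fun u _ => mul_le_mul_of_nonneg_right (hwle l u) (hx u)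
  have hsum : Summable fun l => W l / ρ ^ (l + 1) := by
    refine Summable.of_nonneg_of_le (fun l => div_nonneg (hWnn l) (by positivity)) (fun l => ?_)
      ((summable_geometric_of_lt_one hq0 hq1).mul_left ((P.card : ℝ) / ρ))
    calc W l / ρ ^ (l + 1) ≤ ((P.card : ℝ) * (Δ : ℝ) ^ l) / ρ ^ (l + 1) :=
          div_le_div_of_nonneg_right (hWle l) (by positivity)
      _ = _ := by rw [div_pow, pow_succ]; field_simp
  have hlim : Filter.Tendsto (fun l => y l / ρ ^ l) Filter.atTop (nhds 0) := by
    have hg := (tendsto_pow_atTop_nhds_zero_of_lt_one hq0 hq1).mul_const S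
    rw [zero_mul] at hg
    refine squeeze_zero (fun l => div_nonneg (hynn l) (by positivity)) (fun l => ?_) hg
    calc y l / ρ ^ l ≤ ((Δ : ℝ) ^ l * S) / ρ ^ l :=
          div_le_div_of_nonneg_right (hyle l) (by positivity)
      _ = _ := by rw [div_pow]; ring
  have hy0 : y 0 = S := by simp [y, walkCount, hS]
  have hpart : ∀ n, ∑ l ∈ Finset.range n, (1 - S) * (W l / ρ ^ (l + 1)) = S - y n / ρ ^ n := by
    intro n
    induction n with
    | zero => simp [hy0]
    | succ n ih =>
      rw [Finset.sum_range_succ, ih]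
      have := hrec n
      field_simp
      linear_combination -(ρ ^ n) * this
  set T := ∑' l, W l / ρ ^ (l + 1) with hT
  have hST : (1 - S) * T = S := by
    have h1 := (hsum.hasSum.mul_left (1 - S)).tendsto_sum_nat
    have h2 := hlim.const_sub S
    rw [sub_zero] at h2
    refine tendsto_nhds_unique h1 ?_
    simp only [hpart]
    exact h2
  have hT0 : 0 ≤ T := tsum_nonneg fun l => div_nonneg (hWnn l) (by positivity)
  have hTs : T = (P.card : ℝ) / ρ + ∑' i : ℕ, W (i + 1) / ρ ^ (i + 2) := by
    rw [hT, hsum.tsum_eq_zero_add]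
    simp [W, walkCount]
  change S = 1 - (1 + (P.card : ℝ) / ρ + ∑' i : ℕ, W (i + 1) / ρ ^ (i + 2))⁻¹
  rw [add_assoc, ← hTs]
  have : (1 + T) ≠ 0 := by positivity
  field_simp
  linear_combination -hST
end
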